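/- arXiv:2411.14960 — 2 statements merged into one kernel-verified Lean document; each statement's English description precedes it below -/
import Mathlib

section
/- Let K be a global function field of characteristic p containing a primitive q-th root of unity, where q ≠ p is prime. Fix z ∈ K^× with z ≠ −1, and let L = K((1+z^{-1})^{1/q}). Then: (a) if 𝔭_K is a prime of K with ord_{𝔭_K} z < 0 and ord_{𝔭_K} z ≢ 0 mod q, then 𝔭_K splits completely in L; in particular, for every prime 𝔭_L of L above 𝔭_K one has ord_{𝔭_L} z < 0 and ord_{𝔭_L} z ≢ 0 mod q; (b) for every prime 𝔱_L of L with ord_{𝔱_L} z ≥ 0, one has ord_{𝔱_L} z ≡ 0 mod q. -/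
noncomputable section

/-- A normalized (surjective onto `ℤ`) discrete valuation on a field `K`, i.e. a
"prime" of a global function field. -/
structure FFPrime (K : Type) [Field K] where
  ord : K → WithTop ℤ
  ord_zero : ord 0 = ⊤
  ord_ne_top : ∀ x : K, x ≠ 0 → ord x ≠ ⊤
  ord_one : ord 1 = 0
  ord_mul : ∀ x y : K, ord (x * y) = ord x + ord y
  ord_add : ∀ x y : K, min (ord x) (ord y) ≤ ord (x + y)
  ord_surj : ∀ n : ℤ, ∃ x : K, ord x = (n : WithTop ℤ)

namespace FFPrime

variable {K L : Type} [Field K] [Field L]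

/-- `w` lies over `v` along `φ`, with ramification index `e`. -/
def LiesOverWith (w : FFPrime L) (v : FFPrime K) (φ : K →+* L) (e : ℕ) : Prop :=
  0 < e ∧ ∀ x : K, w.ord (φ x) = ((e : ℤ) : WithTop ℤ) * v.ord x

/-- `w` lies over `v` along `φ`. -/
def LiesOver (w : FFPrime L) (v : FFPrime K) (φ : K →+* L) : Prop :=
  ∃ e : ℕ, w.LiesOverWith v φ e

open Classical in
/-- The ramification index `e(w/v)`. -/
noncomputable def ramIdx (w : FFPrime L) (v : FFPrime K) (φ : K →+* L) : ℕ :=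
  if h : ∃ e : ℕ, w.LiesOverWith v φ e then h.choose else 0

/-- The residue field of `v` has exactly `n` elements. -/
def HasResidueCard (v : FFPrime K) (n : ℕ) : Prop :=
  ∃ s : Finset K, s.card = n ∧ (∀ x ∈ s, 0 ≤ v.ord x) ∧
    (∀ x ∈ s, ∀ y ∈ s, x ≠ y → ¬ 0 < v.ord (x - y)) ∧
    (∀ z : K, 0 ≤ v.ord z → ∃ x ∈ s, 0 < v.ord (z - x))

open Classical in
/-- The residue (relative) degree `f(w/v)`: the unique `f ≥ 1` with
`#κ_w = (#κ_v) ^ f` (residue fields of global function fields are finite). -/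
noncomputable def resDeg (w : FFPrime L) (v : FFPrime K) : ℕ :=
  if h : ∃ f : ℕ, 0 < f ∧ ∃ m n : ℕ, 1 < m ∧ v.HasResidueCard m ∧
      w.HasResidueCard n ∧ n = m ^ f then h.choose else 0

/-- `v` splits completely in the extension given by `φ`: every prime above it has
ramification index and residue degree `1`. -/
def SplitsCompletely (v : FFPrime K) (φ : K →+* L) : Prop :=
  ∀ w : FFPrime L, w.LiesOver v φ → w.ramIdx v φ = 1 ∧ w.resDeg v = 1

/-- `v` is inert in the finite extension `M/K`: there is a unique prime above it, with
ramification index `1` and residue degree `[M : K]`. -/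
def IsInert (v : FFPrime K) (M : Type) [Field M] [Algebra K M] : Prop :=
  (∃! w : FFPrime M, w.LiesOver v (algebraMap K M)) ∧
    ∀ w : FFPrime M, w.LiesOver v (algebraMap K M) →
      w.ramIdx v (algebraMap K M) = 1 ∧ w.resDeg v = Module.finrank K M

/-- `v` ramifies in the extension given by `φ`: some prime above it has ramification
index `> 1`. -/
def Ramifies (v : FFPrime K) (φ : K →+* L) : Prop :=
  ∃ w : FFPrime L, w.LiesOver v φ ∧ 2 ≤ w.ramIdx v φ

/-- `ord_v z ≡ 0 mod q`. -/
def OrdDvd (v : FFPrime K) (q : ℕ) (z : K) : Prop :=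
  ∃ n : ℤ, v.ord z = (((q : ℤ) * n : ℤ) : WithTop ℤ)

end FFPrime

/-- A nontrivial (rank one) valuation on a possibly infinite algebraic extension of a
global function field, with values in `ℚ ∪ {∞}`. -/
structure FFVal (B : Type) [Field B] where
  ord : B → WithTop ℚ
  ord_zero : ord 0 = ⊤
  ord_ne_top : ∀ x : B, x ≠ 0 → ord x ≠ ⊤
  ord_one : ord 1 = 0
  ord_mul : ∀ x y : B, ord (x * y) = ord x + ord y
  ord_add : ∀ x y : B, min (ord x) (ord y) ≤ ord (x + y)
  nontrivial : ∃ x : B, ord x ≠ 0 ∧ ord x ≠ ⊤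

/-- The valuation `V` of the big field restricts, up to a normalization factor `c`, to
the (normalized discrete) prime `v` of `K` along `φ`; i.e. `v` is the prime of `K`
lying below `V`. -/
def FFVal.RestrictsTo {K B : Type} [Field K] [Field B] (V : FFVal B) (v : FFPrime K)
    (φ : K →+* B) : Prop :=
  ∃ c : ℚ, 0 < c ∧
    ∀ x : K, V.ord (φ x) = ((c : ℚ) : WithTop ℚ) * WithTop.map (fun n : ℤ => (n : ℚ)) (v.ord x)

/-- The algebraic extension `B` of the rational function field `F0 = 𝔽_p(t)` is
`q`-bounded: for every valuation of `B`, the `q`-adic valuations of the ramification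
indices and residue degrees along every finite subextension are bounded. -/
def IsQBounded (q : ℕ) (F0 B : Type) [Field F0] [Field B] [Algebra F0 B] : Prop :=
  ∀ V : FFVal B, ∃ C : ℕ,
    ∀ L : IntermediateField F0 B, FiniteDimensional F0 L →
      ∀ v0 : FFPrime F0, ∀ vL : FFPrime L,
        V.RestrictsTo v0 (algebraMap F0 B) →
        V.RestrictsTo vL L.val.toRingHom →
        padicValNat q (vL.ramIdx v0 (algebraMap F0 L)) ≤ C ∧
        padicValNat q (vL.resDeg v0) ≤ C

/-- The prime `v` of `K` has uniformly `q`-bounded ramification in `B`. -/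
def UnifQBoundedRam (q : ℕ) {K : Type} [Field K] (B : Type) [Field B] [Algebra K B]
    (v : FFPrime K) : Prop :=
  ∃ C : ℕ, ∀ F : IntermediateField K B, FiniteDimensional K F →
    ∀ w : FFPrime F, w.LiesOver v (algebraMap K F) →
      padicValNat q (w.ramIdx v (algebraMap K F)) ≤ C

/-- The prime `v` of `K` has uniformly absolutely bounded ramification in `B`. -/
def UnifAbsBoundedRam {K : Type} [Field K] (B : Type) [Field B] [Algebra K B]
    (v : FFPrime K) : Prop :=
  ∃ C : ℕ, ∀ F : IntermediateField K B, FiniteDimensional K F →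
    ∀ w : FFPrime F, w.LiesOver v (algebraMap K F) →
      w.ramIdx v (algebraMap K F) ≤ C

/-- The prime `v` of `K` has uniformly `q`-bounded relative (residue) degree in `B`. -/
def UnifQBoundedRes (q : ℕ) {K : Type} [Field K] (B : Type) [Field B] [Algebra K B]
    (v : FFPrime K) : Prop :=
  ∃ C : ℕ, ∀ F : IntermediateField K B, FiniteDimensional K F →
    ∀ w : FFPrime F, w.LiesOver v (algebraMap K F) →
      padicValNat q (w.resDeg v) ≤ C

/-- The prime `v` of `K` is uniformly `q`-bounded in `B`. -/
def UniformlyQBoundedAt (q : ℕ) {K : Type} [Field K] (B : Type) [Field B] [Algebra K B]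
    (v : FFPrime K) : Prop :=
  UnifQBoundedRam q B v ∧ UnifQBoundedRes q B v

/-- The integral closure in `B` of the valuation ring `O_v = {x ∈ K : ord_v x ≥ 0}`. -/
def valIntegralClosure {K : Type} [Field K] (v : FFPrime K) (B : Type) [Field B]
    [Algebra K B] : Set B :=
  {x : B | ∃ P : Polynomial K, P.Monic ∧ (∀ n : ℕ, 0 ≤ v.ord (P.coeff n)) ∧
    Polynomial.aeval x P = 0}

/-- The integral closure in `B` of the ring `O_{K,S}` of `S`-integers of `K`. -/
def sIntegralClosure {K : Type} [Field K] (S : Set (FFPrime K)) (B : Type) [Field B]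
    [Algebra K B] : Set B :=
  {x : B | ∃ P : Polynomial K, P.Monic ∧
    (∀ n : ℕ, ∀ v : FFPrime K, v ∉ S → 0 ≤ v.ord (P.coeff n)) ∧
    Polynomial.aeval x P = 0}

/-- Elements of `B` that are units at every prime of `B` lying over a prime of `S`. -/
def unitsAtS {K : Type} [Field K] (S : Set (FFPrime K)) (B : Type) [Field B]
    [Algebra K B] : Set B :=
  {x : B | ∀ V : FFVal B, (∃ v ∈ S, V.RestrictsTo v (algebraMap K B)) → V.ord x = 0}

/-- Elements `x` of `B` with `ord (x - 1) > 0` at every prime of `B` lying over a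
prime of `S`. -/
def onesAtS {K : Type} [Field K] (S : Set (FFPrime K)) (B : Type) [Field B]
    [Algebra K B] : Set B :=
  {x : B | ∀ V : FFVal B, (∃ v ∈ S, V.RestrictsTo v (algebraMap K B)) → 0 < V.ord (x - 1)}

/-- A subset of a commutative ring is first-order definable in the language of rings
`{0, 1, +, ·}` with parameters from the ring. -/
def FODefinable {R : Type} [CommRing R] (X : Set R) : Prop :=
  letI : FirstOrder.Ring.CompatibleRing R := FirstOrder.Ring.compatibleRingOfRing R
  Set.Definable₁ (Set.univ : Set R) FirstOrder.Language.ring X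

/-- A subset of a commutative ring is existentially (diophantine) definable: it is cut
out by a block of existential quantifiers followed by a system of polynomial equations,
with parameters (coefficients) from the ring. -/
def ExistDefinable {R : Type} [CommRing R] (X : Set R) : Prop :=
  ∃ (k m : ℕ) (P : Fin m → MvPolynomial (Fin (k + 1)) R),
    ∀ x : R, x ∈ X ↔ ∃ y : Fin k → R, ∀ i : Fin m,
      MvPolynomial.eval (Fin.cons x y) (P i) = 0

/-- Solvability of the norm equation `N(y) = b·x^q + b^q` over (every realization of)
the tower `L₂(a^{1/q})/L₂`, where `L₁ = F((1+(b x^q+b^q)⁻¹)^{1/q})` and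
`L₂ = L₁((1+(a+a⁻¹)b⁻¹)^{1/q})`. -/
def NormTower2Solvable (q : ℕ) (F : Type) [Field F] (a b x : F) : Prop :=
  ∀ (M1 : Type) [Field M1] [Algebra F M1] (α1 : M1),
    α1 ^ q = algebraMap F M1 (1 + (b * x ^ q + b ^ q)⁻¹) →
    IntermediateField.adjoin F {α1} = ⊤ →
    ∀ (M2 : Type) [Field M2] [Algebra M1 M2] (α2 : M2),
      α2 ^ q = algebraMap M1 M2 (algebraMap F M1 (1 + (a + a⁻¹) * b⁻¹)) →
      IntermediateField.adjoin M1 {α2} = ⊤ →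
      ∀ (M3 : Type) [Field M3] [Algebra M2 M3] (α3 : M3),
        α3 ^ q = algebraMap M2 M3 (algebraMap M1 M2 (algebraMap F M1 a)) →
        IntermediateField.adjoin M2 {α3} = ⊤ →
        ∃ y : M3, Algebra.norm M2 y = algebraMap M1 M2 (algebraMap F M1 (b * x ^ q + b ^ q))

/-- Solvability of the norm equation `N(y) = b·x^q + b^q` over (every realization of)
the tower `L₄(a^{1/q})/L₄`, where `L₁ = F((1+(b x^q+b^q)⁻¹)^{1/q})`,
`L₃ = L₁((1+x⁻¹)^{1/q})` and `L₄ = L₃((1+(a+a⁻¹)x⁻¹)^{1/q})`. -/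
def NormTower4Solvable (q : ℕ) (F : Type) [Field F] (a b x : F) : Prop :=
  ∀ (M1 : Type) [Field M1] [Algebra F M1] (α1 : M1),
    α1 ^ q = algebraMap F M1 (1 + (b * x ^ q + b ^ q)⁻¹) →
    IntermediateField.adjoin F {α1} = ⊤ →
    ∀ (M3 : Type) [Field M3] [Algebra M1 M3] (α3 : M3),
      α3 ^ q = algebraMap M1 M3 (algebraMap F M1 (1 + x⁻¹)) →
      IntermediateField.adjoin M1 {α3} = ⊤ →
      ∀ (M4 : Type) [Field M4] [Algebra M3 M4] (α4 : M4),
        α4 ^ q = algebraMap M3 M4 (algebraMap M1 M3 (algebraMap F M1 (1 + (a + a⁻¹) * x⁻¹))) →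
        IntermediateField.adjoin M3 {α4} = ⊤ →
        ∀ (M5 : Type) [Field M5] [Algebra M4 M5] (α5 : M5),
          α5 ^ q = algebraMap M4 M5 (algebraMap M3 M4 (algebraMap M1 M3 (algebraMap F M1 a))) →
          IntermediateField.adjoin M4 {α5} = ⊤ →
          ∃ y : M5, Algebra.norm M4 y =
            algebraMap M3 M4 (algebraMap M1 M3 (algebraMap F M1 (b * x ^ q + b ^ q)))

/-- Unsolvability of the norm equation `N(y) = b·x^q + b^q` over (every realization of)
the tower `L₄(a^{1/q})/L₄` as in `NormTower4Solvable`. -/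
def NormTower4Unsolvable (q : ℕ) (F : Type) [Field F] (a b x : F) : Prop :=
  ∀ (M1 : Type) [Field M1] [Algebra F M1] (α1 : M1),
    α1 ^ q = algebraMap F M1 (1 + (b * x ^ q + b ^ q)⁻¹) →
    IntermediateField.adjoin F {α1} = ⊤ →
    ∀ (M3 : Type) [Field M3] [Algebra M1 M3] (α3 : M3),
      α3 ^ q = algebraMap M1 M3 (algebraMap F M1 (1 + x⁻¹)) →
      IntermediateField.adjoin M1 {α3} = ⊤ →
      ∀ (M4 : Type) [Field M4] [Algebra M3 M4] (α4 : M4),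
        α4 ^ q = algebraMap M3 M4 (algebraMap M1 M3 (algebraMap F M1 (1 + (a + a⁻¹) * x⁻¹))) →
        IntermediateField.adjoin M3 {α4} = ⊤ →
        ∀ (M5 : Type) [Field M5] [Algebra M4 M5] (α5 : M5),
          α5 ^ q = algebraMap M4 M5 (algebraMap M3 M4 (algebraMap M1 M3 (algebraMap F M1 a))) →
          IntermediateField.adjoin M4 {α5} = ⊤ →
          ¬ ∃ y : M5, Algebra.norm M4 y =
            algebraMap M3 M4 (algebraMap M1 M3 (algebraMap F M1 (b * x ^ q + b ^ q)))

namespace FFPrime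

variable {K : Type} [Field K] (v : FFPrime K)

/-- The additive valuation attached to a prime. -/
def av : AddValuation K (WithTop ℤ) :=
  AddValuation.of v.ord v.ord_zero v.ord_one v.ord_add v.ord_mul

theorem av_apply (x : K) : v.av x = v.ord x := rfl

theorem ord_pow' (x : K) (n : ℕ) : v.ord (x ^ n) = n • v.ord x := v.av.map_pow x n

theorem ord_neg' (x : K) : v.ord (-x) = v.ord x := v.av.map_neg x

theorem ord_sub_swap (x y : K) : v.ord (x - y) = v.ord (y - x) := v.av.map_sub_swap x y

theorem exists_int {x : K} (hx : x ≠ 0) : ∃ n : ℤ, v.ord x = (n : WithTop ℤ) := by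
  obtain ⟨n, hn⟩ := WithTop.ne_top_iff_exists.1 (v.ord_ne_top x hx)
  exact ⟨n, hn.symm⟩

theorem exists_int_le (x : K) : ∃ n : ℤ, (n : WithTop ℤ) ≤ v.ord x := by
  by_cases hx : x = 0
  · exact ⟨0, by rw [hx, v.ord_zero]; exact le_top⟩
  · obtain ⟨n, hn⟩ := v.exists_int hx
    exact ⟨n, hn.ge⟩

theorem ord_eq_zero_of_pow {x : K} {n : ℕ} (hn : n ≠ 0) (h : v.ord (x ^ n) = 0) :
    v.ord x = 0 := by
  have hx : x ≠ 0 := by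
    rintro rfl
    rw [zero_pow hn, v.ord_zero] at h
    exact absurd h (by decide)
  obtain ⟨m, hm⟩ := v.exists_int hx
  rw [v.ord_pow', hm] at h
  rw [hm]
  have : n • m = 0 := by exact_mod_cast h
  have h2 : m = 0 := by
    rcases smul_eq_zero.1 this with h | h
    · exact absurd h hn
    · exact h
  rw [h2]; rfl

theorem ord_inv_int {x : K} {n : ℤ} (h : v.ord x = (n : WithTop ℤ)) :
    v.ord x⁻¹ = ((-n : ℤ) : WithTop ℤ) := by
  have hx : x ≠ 0 := by
    rintro rfl
    rw [v.ord_zero] at h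
    exact WithTop.top_ne_coe h
  obtain ⟨m, hm⟩ := v.exists_int (inv_ne_zero hx)
  have h1 := v.ord_mul x x⁻¹
  rw [mul_inv_cancel₀ hx, v.ord_one, h, hm] at h1
  have : (0 : ℤ) = n + m := by exact_mod_cast h1
  rw [hm]
  congr 1
  omega

theorem one_le_of_pos {a : WithTop ℤ} (h : 0 < a) : ((1 : ℤ) : WithTop ℤ) ≤ a := by
  induction a using WithTop.recTopCoe with
  | top => exact le_top
  | coe a =>
    have : (0 : ℤ) < a := by exact_mod_cast h
    exact_mod_cast this

theorem pos_of_one_le {a : WithTop ℤ} (h : ((1 : ℤ) : WithTop ℤ) ≤ a) : 0 < a :=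
  lt_of_lt_of_le (by exact_mod_cast Int.one_pos) h

theorem ord_of_sub_one {x : K} (h : 0 < v.ord (x - 1)) : v.ord x = 0 := by
  have := v.av.map_eq_of_lt_sub (x := 1) (y := x)
    (by rw [av_apply, av_apply, v.ord_one]; exact h)
  rw [av_apply, av_apply, v.ord_one] at this
  exact this

theorem oneunit_mul {x y : K} (hx : 0 < v.ord (x - 1)) (hy : 0 < v.ord (y - 1)) :
    0 < v.ord (x * y - 1) := by
  have : x * y - 1 = (x - 1) * y + (y - 1) := by ring
  rw [this]
  refine v.av.map_lt_add ?_ hy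
  rw [av_apply, v.ord_mul, v.ord_of_sub_one hy, add_zero]
  exact hx

theorem oneunit_pow {x : K} (hx : 0 < v.ord (x - 1)) (n : ℕ) : 0 < v.ord (x ^ n - 1) := by
  induction n with
  | zero => simp [v.ord_zero]
  | succ n ih => rw [pow_succ]; exact v.oneunit_mul ih hx

theorem HasResidueCard.le {v : FFPrime K} {m n : ℕ} (hm : v.HasResidueCard m)
    (hn : v.HasResidueCard n) : m ≤ n := by
  obtain ⟨s, rfl, s0, s1, s2⟩ := hm
  obtain ⟨t, rfl, t0, t1, t2⟩ := hn
  have : ∀ x ∈ s, ∃ y ∈ t, 0 < v.ord (x - y) := fun x hx => t2 x (s0 x hx)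
  choose! f hf hf' using this
  refine Finset.card_le_card_of_injOn f hf ?_
  intro x hx y hy hxy
  by_contra hne
  refine s1 x hx y hy hne ?_
  have : x - y = (x - f x) + (f y - y) := by rw [hxy]; ring
  rw [this]
  refine v.av.map_lt_add (hf' x hx) ?_
  rw [av_apply, v.ord_sub_swap]
  exact hf' y hy

theorem HasResidueCard.unique {v : FFPrime K} {m n : ℕ} (hm : v.HasResidueCard m)
    (hn : v.HasResidueCard n) : m = n := le_antisymm (hm.le hn) (hn.le hm)

section Dense

variable {M : Type} [Field M] [Algebra K M]

/-- `m` is approximated arbitrarily well by elements of `K`. -/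
def Approx (K : Type) [Field K] {M : Type} [Field M] [Algebra K M] (w : FFPrime M) (m : M) : Prop :=
  ∀ N : ℤ, ∃ k : K, (N : WithTop ℤ) ≤ w.ord (m - algebraMap K M k)

variable (w : FFPrime M)

theorem approx_algebraMap (k : K) : Approx K w (algebraMap K M k) := fun N =>
  ⟨k, by rw [sub_self, w.ord_zero]; exact le_top⟩

variable {w} in
theorem Approx.add {a b : M} (ha : Approx K w a) (hb : Approx K w b) : Approx K w (a + b) := by
  intro N
  obtain ⟨k, hk⟩ := ha N
  obtain ⟨l, hl⟩ := hb N
  refine ⟨k + l, ?_⟩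
  have : a + b - algebraMap K M (k + l) = (a - algebraMap K M k) + (b - algebraMap K M l) := by
    rw [map_add]; ring
  rw [this]
  exact w.av.map_le_add hk hl

variable {w} in
theorem Approx.mul {a b : M} (ha : Approx K w a) (hb : Approx K w b) : Approx K w (a * b) := by
  intro N
  obtain ⟨A, hA⟩ := w.exists_int_le a
  obtain ⟨l, hl⟩ := hb (N - A)
  obtain ⟨B, hB⟩ := w.exists_int_le (algebraMap K M l)
  obtain ⟨k, hk⟩ := ha (N - B)
  refine ⟨k * l, ?_⟩
  have : a * b - algebraMap K M (k * l)
      = a * (b - algebraMap K M l) + (a - algebraMap K M k) * algebraMap K M l := by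
    rw [map_mul]; ring
  rw [this]
  refine w.av.map_le_add ?_ ?_
  · rw [av_apply, w.ord_mul]
    have : (N : WithTop ℤ) = (A : WithTop ℤ) + ((N - A : ℤ) : WithTop ℤ) := by
      rw [← WithTop.coe_add]; congr 1; ring
    rw [this]
    exact add_le_add hA hl
  · rw [av_apply, w.ord_mul]
    have : (N : WithTop ℤ) = ((N - B : ℤ) : WithTop ℤ) + (B : WithTop ℤ) := by
      rw [← WithTop.coe_add]; congr 1; ring
    rw [this]
    exact add_le_add hk hB

theorem approx_root {q : ℕ} (hq0 : (q : M) ≠ 0) (hwq : w.ord (q : M) = 0) {β : M} {c : K}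
    (hβ : β ^ q = algebraMap K M c) (h1 : 0 < w.ord (β - 1)) : Approx K w β := by
  have key : ∀ n : ℕ, ∃ x : K, 0 < w.ord (algebraMap K M x - 1) ∧
      (((n : ℤ)) : WithTop ℤ) ≤ w.ord (β - algebraMap K M x) := by
    intro n
    induction n with
    | zero =>
      refine ⟨1, ?_, ?_⟩
      · simp [w.ord_zero]
      · rw [map_one]; exact_mod_cast h1.le
    | succ n ih =>
      obtain ⟨x, hx1, hx⟩ := ih
      set y := algebraMap K M x with hy
      set S := ∑ i ∈ Finset.range q, β ^ i * y ^ (q - 1 - i) with hS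
      have hgs : (β - y) * S = β ^ q - y ^ q := (Commute.all β y).mul_geom_sum₂ q
      have hSq : 0 < w.ord ((q : M) - S) := by
        rw [w.ord_sub_swap]
        have : S - q = ∑ i ∈ Finset.range q, (β ^ i * y ^ (q - 1 - i) - 1) := by
          rw [Finset.sum_sub_distrib]; simp [hS]
        rw [this]
        refine w.av.map_lt_sum (by decide) fun i _ => ?_
        exact w.oneunit_mul (w.oneunit_pow h1 i) (w.oneunit_pow hx1 _)
      have hd : β - algebraMap K M (x + (c - x ^ q) / q) = (β - y) * (((q : M) - S) * (q : M)⁻¹) := by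
        have e : algebraMap K M (x + (c - x ^ q) / q) = y + (β - y) * S * (q : M)⁻¹ := by
          rw [hgs, hβ]; simp [hy, div_eq_mul_inv]
        rw [e]; field_simp; ring
      have hle : (((n + 1 : ℕ) : ℤ) : WithTop ℤ) ≤ w.ord (β - algebraMap K M (x + (c - x ^ q) / q)) := by
        rw [hd, w.ord_mul, w.ord_mul]
        have hqi : w.ord ((q : M)⁻¹) = 0 := by
          have := w.ord_inv_int (n := 0) (x := (q : M)) (by rw [hwq]; rfl)
          rw [this]; rfl
        rw [hqi, add_zero]
        have : (((n + 1 : ℕ) : ℤ) : WithTop ℤ) = (((n : ℤ)) : WithTop ℤ) + ((1 : ℤ) : WithTop ℤ) := by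
          rw [← WithTop.coe_add]; congr 1
        rw [this]
        exact add_le_add hx (one_le_of_pos hSq)
      refine ⟨_, ?_, hle⟩
      have : algebraMap K M (x + (c - x ^ q) / q) - 1
          = (algebraMap K M (x + (c - x ^ q) / q) - β) + (β - 1) := by ring
      rw [this]
      refine w.av.map_lt_add ?_ h1
      rw [av_apply, w.ord_sub_swap]
      refine pos_of_one_le (le_trans ?_ hle)
      exact_mod_cast (by omega : (1 : ℤ) ≤ ((n + 1 : ℕ) : ℤ))
  intro N
  obtain ⟨x, -, hx⟩ := key N.toNat
  refine ⟨x, le_trans ?_ hx⟩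
  exact_mod_cast Int.self_le_toNat N

theorem dense_split (hdense : ∀ m : M, Approx K w m) (hlies : w.LiesOver v (algebraMap K M))
    {n : ℕ} (hn : 1 < n) (hcard : v.HasResidueCard n) :
    w.ramIdx v (algebraMap K M) = 1 ∧ w.resDeg v = 1 ∧
      ∀ x : K, w.ord (algebraMap K M x) = v.ord x := by
  have he : ∀ e : ℕ, w.LiesOverWith v (algebraMap K M) e → e = 1 := by
    rintro e ⟨he0, he⟩
    obtain ⟨m, hm⟩ := w.ord_surj 1
    obtain ⟨k, hk⟩ := hdense m 2
    have hkm : w.ord (algebraMap K M k) = w.ord m := by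
      refine w.av.map_eq_of_lt_sub (x := m) ?_
      rw [av_apply, av_apply, w.ord_sub_swap, hm]
      refine lt_of_lt_of_le ?_ hk
      exact_mod_cast (by norm_num : (1 : ℤ) < 2)
    rw [he k, hm] at hkm
    have hk0 : k ≠ 0 := by
      rintro rfl
      rw [v.ord_zero, WithTop.mul_top (by exact_mod_cast he0.ne')] at hkm
      exact WithTop.top_ne_coe hkm
    obtain ⟨j, hj⟩ := v.exists_int hk0
    rw [hj] at hkm
    have : (e : ℤ) * j = 1 := by exact_mod_cast hkm
    have := Int.isUnit_iff.1 (IsUnit.of_mul_eq_one _ this)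
    omega
  have hlw : w.LiesOverWith v (algebraMap K M) 1 := by
    obtain ⟨e, h⟩ := hlies
    have := he e h
    subst this; exact h
  have hord : ∀ x : K, w.ord (algebraMap K M x) = v.ord x := by
    intro x
    rw [hlw.2 x]
    simp
  have hwcard : w.HasResidueCard n := by
    classical
    obtain ⟨s, hs, s0, s1, s2⟩ := hcard
    refine ⟨s.image (algebraMap K M), ?_, ?_, ?_, ?_⟩
    · rw [Finset.card_image_of_injective _ (algebraMap K M).injective, hs]
    · intro x hx
      obtain ⟨y, hy, rfl⟩ := Finset.mem_image.1 hx
      rw [hord]; exact s0 y hy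
    · intro x hx y hy hne
      obtain ⟨x, hx', rfl⟩ := Finset.mem_image.1 hx
      obtain ⟨y, hy', rfl⟩ := Finset.mem_image.1 hy
      rw [← map_sub, hord]
      exact s1 x hx' y hy' (fun h => hne (by rw [h]))
    · intro m hm
      obtain ⟨k, hk⟩ := hdense m 1
      have hk := pos_of_one_le hk
      have hk0 : 0 ≤ v.ord k := by
        rw [← hord]
        have : algebraMap K M k = m - (m - algebraMap K M k) := by ring
        rw [this]
        exact w.av.map_le_sub hm hk.le
      obtain ⟨x, hx, hx'⟩ := s2 k hk0
      refine ⟨_, Finset.mem_image_of_mem _ hx, ?_⟩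
      have : m - algebraMap K M x = (m - algebraMap K M k) + algebraMap K M (k - x) := by
        rw [map_sub]; ring
      rw [this]
      refine w.av.map_lt_add hk ?_
      rw [av_apply, hord]; exact hx'
  refine ⟨?_, ?_, hord⟩
  · unfold ramIdx
    have hlies' : ∃ e : ℕ, w.LiesOverWith v (algebraMap K M) e := hlies
    rw [dif_pos hlies']
    exact he _ hlies'.choose_spec
  · have hex : ∃ f : ℕ, 0 < f ∧ ∃ m n : ℕ, 1 < m ∧ v.HasResidueCard m ∧
      w.HasResidueCard n ∧ n = m ^ f := ⟨1, one_pos, n, n, hn, hcard, hwcard, (pow_one n).symm⟩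
    unfold resDeg
    rw [dif_pos hex]
    obtain ⟨-, a, b, h1, ha, hb, hab⟩ := hex.choose_spec
    have h2 := ha.unique hcard
    have h3 := hb.unique hwcard
    subst h2
    subst h3
    exact ((Nat.pow_eq_self_iff h1).1 hab.symm)

end Dense

end FFPrime
namespace FFPrime

section Residue

variable {K : Type} [Field K] (v : FFPrime K)

/-- The valuation ring of a prime. -/
def vring : ValuationSubring K where
  carrier := {x | 0 ≤ v.ord x}
  mul_mem' := by
    intro a b ha hb
    simp only [Set.mem_ofPred_eq] at *
    rw [v.ord_mul]; exact add_nonneg ha hb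
  one_mem' := by simp [v.ord_one]
  add_mem' := by
    intro a b ha hb
    exact v.av.map_le_add ha hb
  zero_mem' := by simp [v.ord_zero]
  neg_mem' := by
    intro a ha
    simp only [Set.mem_ofPred_eq] at *
    rw [v.ord_neg']; exact ha
  mem_or_inv_mem' := by
    intro x
    by_cases hx : x = 0
    · left; simp [hx, v.ord_zero]
    · obtain ⟨n, hn⟩ := v.exists_int hx
      rcases le_total 0 n with h | h
      · left
        change 0 ≤ v.ord x
        rw [hn]; exact_mod_cast h
      · right
        change 0 ≤ v.ord x⁻¹
        rw [v.ord_inv_int hn]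
        exact_mod_cast (by omega : 0 ≤ -n)

theorem mem_vring {x : K} : x ∈ v.vring ↔ 0 ≤ v.ord x := Iff.rfl

theorem mem_max_iff (x : v.vring) :
    x ∈ IsLocalRing.maximalIdeal v.vring ↔ 0 < v.ord (x : K) := by
  have hx0 : 0 ≤ v.ord (x : K) := x.2
  rw [IsLocalRing.mem_maximalIdeal, mem_nonunits_iff]
  constructor
  · intro h
    refine lt_of_le_of_ne hx0 fun h0 => h ?_
    have hne : (x : K) ≠ 0 := by
      intro h1
      rw [h1, v.ord_zero] at h0
      exact absurd h0 (by decide)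
    have hi : v.ord (x : K)⁻¹ = 0 := by
      have := v.ord_inv_int (n := 0) (x := (x : K)) (by rw [← h0]; rfl)
      rw [this]; rfl
    refine IsUnit.of_mul_eq_one (⟨(x : K)⁻¹, hi.ge⟩ : v.vring) ?_
    ext
    exact mul_inv_cancel₀ hne
  · intro h hu
    obtain ⟨y, hy⟩ := hu.exists_right_inv
    have h1 : (x : K) * (y : K) = 1 := by
      have := congrArg (Subtype.val) hy
      exact this
    have h2 := v.ord_mul (x : K) (y : K)
    rw [h1, v.ord_one] at h2
    have hy0 : 0 ≤ v.ord (y : K) := y.2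
    have : 0 < v.ord (x : K) + v.ord (y : K) := add_pos_of_pos_of_nonneg h hy0
    exact absurd h2 this.ne

theorem residue_eq_zero_iff' (x : v.vring) :
    IsLocalRing.residue v.vring x = 0 ↔ 0 < v.ord (x : K) := by
  rw [IsLocalRing.residue_eq_zero_iff, mem_max_iff]

theorem hasResidueCard_of_finite [Finite (IsLocalRing.ResidueField v.vring)] :
    ∃ m : ℕ, 1 < m ∧ v.HasResidueCard m := by
  classical
  have := Fintype.ofFinite (IsLocalRing.ResidueField v.vring)
  refine ⟨Fintype.card (IsLocalRing.ResidueField v.vring), Fintype.one_lt_card, ?_⟩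
  have hs := IsLocalRing.residue_surjective (R := v.vring)
  choose f hf using hs
  have hinj : Function.Injective fun a => (f a : K) := by
    intro a b hab
    have : f a = f b := Subtype.ext hab
    rw [← hf a, ← hf b, this]
  refine ⟨Finset.univ.image fun a => (f a : K), ?_, ?_, ?_, ?_⟩
  · rw [Finset.card_image_of_injective _ hinj, Finset.card_univ]
  · intro x hx
    obtain ⟨a, -, rfl⟩ := Finset.mem_image.1 hx
    exact (f a).2
  · intro x hx y hy hne hpos
    obtain ⟨a, -, rfl⟩ := Finset.mem_image.1 hx
    obtain ⟨b, -, rfl⟩ := Finset.mem_image.1 hy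
    apply hne
    have := (v.residue_eq_zero_iff' (f a - f b)).2 hpos
    rw [map_sub, hf, hf, sub_eq_zero] at this
    rw [this]
  · intro z hz
    refine ⟨f (IsLocalRing.residue _ (⟨z, hz⟩ : v.vring)), Finset.mem_image_of_mem _ (Finset.mem_univ _), ?_⟩
    refine (v.residue_eq_zero_iff' ((⟨z, hz⟩ : v.vring) - f _)).1 ?_
    rw [map_sub, hf, sub_self]

theorem finite_residue {R : Type} [CommRing R] [IsDomain R] [IsPrincipalIdealRing R] [Algebra R K]
    (hinj : Function.Injective (algebraMap R K))
    (hfin : ∀ I : Ideal R, I ≠ ⊥ → Finite (R ⧸ I)) (n : ℕ)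
    (hdep : ∀ x : Fin (n + 1) → K, ∃ g : Fin (n + 1) → R,
      ∑ i, algebraMap R K (g i) * x i = 0 ∧ ∃ i, g i ≠ 0)
    (hint : ∀ r : R, 0 ≤ v.ord (algebraMap R K r)) :
    Finite (IsLocalRing.ResidueField v.vring) := by
  classical
  let j : R →+* v.vring := (algebraMap R K).codRestrict v.vring.toSubring hint
  have hj : ∀ r, ((j r : v.vring) : K) = algebraMap R K r := fun r => rfl
  let ψ : R →+* IsLocalRing.ResidueField v.vring := (IsLocalRing.residue v.vring).comp j
  have hψ : ∀ r, ψ r = IsLocalRing.residue v.vring (j r) := fun r => rfl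
  let P : Ideal R := RingHom.ker ψ
  have hmemP : ∀ r, r ∈ P ↔ 0 < v.ord (algebraMap R K r) := by
    intro r
    rw [RingHom.mem_ker, hψ, residue_eq_zero_iff', hj]
  have hPprime : P.IsPrime := RingHom.ker_isPrime ψ
  have hPbot : P ≠ ⊥ := by
    intro hbot
    obtain ⟨x, hx⟩ := v.ord_surj 1
    have hx0 : x ≠ 0 := by
      rintro rfl
      rw [v.ord_zero] at hx
      exact WithTop.top_ne_coe hx
    have halg : IsAlgebraic R x := by
      obtain ⟨g, hg, i, hi⟩ := hdep fun i => x ^ (i : ℕ)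
      refine ⟨∑ i : Fin (n + 1), Polynomial.monomial (i : ℕ) (g i), ?_, ?_⟩
      · intro h0
        apply hi
        have := congrArg (fun f => Polynomial.coeff f (i : ℕ)) h0
        simp only [Polynomial.finsetSum_coeff, Polynomial.coeff_monomial, Polynomial.coeff_zero,
          Fin.val_inj, Finset.sum_ite_eq', Finset.mem_univ, if_true] at this
        exact this
      · rw [map_sum]
        simpa [Polynomial.aeval_monomial] using hg
    obtain ⟨f, hf0, hf⟩ := halg.exists_nonzero_coeff_and_aeval_eq_zero
      (mem_nonZeroDivisors_of_ne_zero hx0)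
    apply hf0
    rw [← Submodule.mem_bot R, ← hbot, hmemP]
    rw [← Polynomial.divX_mul_X_add f, map_add, map_mul, Polynomial.aeval_X, Polynomial.aeval_C,
      add_comm, add_eq_zero_iff_eq_neg] at hf
    rw [hf, v.ord_neg', v.ord_mul, hx]
    have hpoly : ∀ h : Polynomial R, 0 ≤ v.ord (Polynomial.aeval x h) := by
      intro h
      rw [Polynomial.aeval_eq_sum_range]
      refine v.av.map_le_sum fun i _ => ?_
      rw [av_apply, Algebra.smul_def, v.ord_mul, v.ord_pow', hx]
      refine add_nonneg (hint _) ?_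
      exact nsmul_nonneg (by exact_mod_cast Int.one_pos.le) _
    exact lt_of_lt_of_le (by exact_mod_cast Int.one_pos) (le_add_of_nonneg_left (hpoly _))
  have hfinP : Finite (R ⧸ P) := hfin P hPbot
  have hmax : P.IsMaximal := Ideal.Quotient.maximal_of_isField P (Finite.isField_of_domain (R ⧸ P))
  let _ : Field (R ⧸ P) := Ideal.Quotient.field P
  let _ : Algebra (R ⧸ P) (IsLocalRing.ResidueField v.vring) := (RingHom.kerLift ψ).toAlgebra
  have halg : ∀ r : R, algebraMap (R ⧸ P) (IsLocalRing.ResidueField v.vring)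
      (Ideal.Quotient.mk P r) = ψ r := fun r => rfl
  have hkey : ∀ y : Fin (n + 1) → IsLocalRing.ResidueField v.vring,
      ¬ LinearIndependent (R ⧸ P) y := by
    intro y
    have hs := IsLocalRing.residue_surjective (R := v.vring)
    choose f hf using fun i => hs (y i)
    obtain ⟨g, hg, i, hi⟩ := hdep fun i => (f i : K)
    obtain ⟨_inst⟩ : Nonempty (NormalizedGCDMonoid R) := inferInstance
    obtain ⟨g', hg', hgcd⟩ := Finset.extract_gcd g (Finset.univ_nonempty (α := Fin (n + 1)))
    set d := Finset.univ.gcd g with hd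
    have hd0 : d ≠ 0 := by
      intro h0
      apply hi
      rw [hg' i (Finset.mem_univ _), h0, zero_mul]
    have hdK : algebraMap R K d ≠ 0 := by
      intro h0
      exact hd0 (hinj (by rw [h0, map_zero]))
    have hsum : ∑ i, algebraMap R K (g' i) * (f i : K) = 0 := by
      have : algebraMap R K d * ∑ i, algebraMap R K (g' i) * (f i : K) = 0 := by
        rw [← hg, Finset.mul_sum]
        refine Finset.sum_congr rfl fun i hi => ?_
        rw [hg' i hi, map_mul, mul_assoc]
      exact (mul_eq_zero.1 this).resolve_left hdK
    have hsumO : ∑ i, j (g' i) * f i = 0 := by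
      apply Subtype.ext
      have h1 : ((∑ i, j (g' i) * f i : v.vring) : K) = ∑ i, algebraMap R K (g' i) * (f i : K) :=
        map_sum v.vring.subtype _ _
      exact h1.trans hsum
    have hsumk : ∑ i, ψ (g' i) * y i = 0 := by
      have := congrArg (IsLocalRing.residue v.vring) hsumO
      rw [map_sum, map_zero] at this
      rw [← this]
      refine Finset.sum_congr rfl fun i _ => ?_
      rw [map_mul, hf, hψ]
    obtain ⟨k, hk⟩ : ∃ k, g' k ∉ P := by
      by_contra hall
      push Not at hall
      obtain ⟨π, hπ⟩ := (IsPrincipalIdealRing.principal P).principal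
      have : π ∣ Finset.univ.gcd g' := by
        refine Finset.dvd_gcd fun i _ => ?_
        rw [← Ideal.mem_span_singleton]
        have := hall i
        rw [hπ] at this
        exact this
      rw [hgcd] at this
      apply hPprime.ne_top
      rw [hπ]
      exact Ideal.span_singleton_eq_top.2 (isUnit_of_dvd_one this)
    rw [Fintype.not_linearIndependent_iff]
    refine ⟨fun i => Ideal.Quotient.mk P (g' i), ?_, k, ?_⟩
    · rw [← hsumk]
      refine Finset.sum_congr rfl fun i _ => ?_
      rw [Algebra.smul_def, halg]
    · intro h0
      exact hk (Ideal.Quotient.eq_zero_iff_mem.1 h0)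
  have hrank : Module.rank (R ⧸ P) (IsLocalRing.ResidueField v.vring) ≤ (n : ℕ) := by
    refine rank_le fun s hs => ?_
    by_contra hlt
    have hcard : Fintype.card (Fin (n + 1)) ≤ Fintype.card s := by
      simp only [Fintype.card_fin, Fintype.card_coe]; omega
    obtain ⟨e⟩ := Function.Embedding.nonempty_of_card_le hcard
    exact hkey _ (hs.comp e e.injective)
  have : Module.Finite (R ⧸ P) (IsLocalRing.ResidueField v.vring) :=
    Module.rank_lt_aleph0_iff.1 (lt_of_le_of_lt hrank Cardinal.natCast_lt_aleph0)
  exact Module.finite_of_finite (R ⧸ P)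

end Residue

end FFPrime
namespace FFPrime

open Polynomial in
theorem finite_quot (p : ℕ) [Fact p.Prime] (I : Ideal (ZMod p)[X]) (hI : I ≠ ⊥) :
    Finite ((ZMod p)[X] ⧸ I) := by
  obtain ⟨f, hf⟩ := (IsPrincipalIdealRing.principal I).principal
  have hf0 : f ≠ 0 := by
    rintro rfl
    apply hI
    rw [hf]; simp
  have h1 : Module.Finite (ZMod p) (AdjoinRoot f) := (AdjoinRoot.powerBasis hf0).finite
  have h2 : Finite (AdjoinRoot f) := Module.finite_of_finite (ZMod p)
  rw [hf]
  exact h2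

section Poly

open Polynomial

variable {k K : Type} [Field k] [Field K]

theorem reflect_eval (ι : k →+* K) {t : K} (ht : t ≠ 0) (f : k[X]) {N : ℕ}
    (hN : f.natDegree ≤ N) : (reflect N f).eval₂ ι t⁻¹ * t ^ N = f.eval₂ ι t := by
  letI : Invertible t := invertibleOfNonzero ht
  have := eval₂_reflect_mul_pow ι t N f hN
  rwa [invOf_eq_inv] at this

theorem inj_inv (ι : k →+* K) {t : K} (ht : t ≠ 0)
    (hinj : ∀ f : k[X], f.eval₂ ι t = 0 → f = 0) (f : k[X]) (hf : f.eval₂ ι t⁻¹ = 0) : f = 0 := by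
  have h := reflect_eval ι (inv_ne_zero ht) f le_rfl
  rw [inv_inv, hf] at h
  have h2 := hinj _ ((mul_eq_zero.1 h).resolve_right (pow_ne_zero _ (inv_ne_zero ht)))
  exact reflect_eq_zero_iff.1 h2

theorem dep_inv (ι : k →+* K) {t : K} (ht : t ≠ 0) {n : ℕ} (x : Fin n → K)
    (h : ∃ g : Fin n → k[X], ∑ i, (g i).eval₂ ι t * x i = 0 ∧ ∃ i, g i ≠ 0) :
    ∃ g : Fin n → k[X], ∑ i, (g i).eval₂ ι t⁻¹ * x i = 0 ∧ ∃ i, g i ≠ 0 := by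
  obtain ⟨g, hg, i, hi⟩ := h
  let N := Finset.univ.sup fun i => (g i).natDegree
  have hN : ∀ i, (g i).natDegree ≤ N := fun i =>
    Finset.le_sup (f := fun i => (g i).natDegree) (Finset.mem_univ i)
  refine ⟨fun i => reflect N (g i), ?_, i, fun h0 => hi (reflect_eq_zero_iff.1 h0)⟩
  have : t ^ N * ∑ i, (reflect N (g i)).eval₂ ι t⁻¹ * x i = 0 := by
    rw [← hg, Finset.mul_sum]
    refine Finset.sum_congr rfl fun i _ => ?_
    rw [← reflect_eval ι ht (g i) (hN i)]; ring
  exact (mul_eq_zero.1 this).resolve_left (pow_ne_zero _ ht)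

end Poly

section FF

open Polynomial

variable (p : ℕ) [Fact p.Prime] {K : Type} [Field K]

theorem ord_const (v : FFPrime K) (ι : ZMod p →+* K) {a : ZMod p} (ha : a ≠ 0) :
    v.ord (ι a) = 0 := by
  have hp : p - 1 ≠ 0 := by have := (Fact.out : p.Prime).two_le; omega
  apply v.ord_eq_zero_of_pow hp
  rw [← map_pow, ZMod.pow_card_sub_one_eq_one ha, map_one, v.ord_one]

theorem card_of_param (v : FFPrime K) (ι : ZMod p →+* K) (τ : K) (hτ : 0 ≤ v.ord τ)
    (hinj : ∀ f : (ZMod p)[X], f.eval₂ ι τ = 0 → f = 0) (n : ℕ)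
    (hdep : ∀ x : Fin (n + 1) → K, ∃ g : Fin (n + 1) → (ZMod p)[X],
      ∑ i, (g i).eval₂ ι τ * x i = 0 ∧ ∃ i, g i ≠ 0) :
    ∃ m : ℕ, 1 < m ∧ v.HasResidueCard m := by
  let _ : Algebra (ZMod p)[X] K := (eval₂RingHom ι τ).toAlgebra
  have ha : ∀ f : (ZMod p)[X], algebraMap (ZMod p)[X] K f = f.eval₂ ι τ := fun f => rfl
  have hint : ∀ f : (ZMod p)[X], 0 ≤ v.ord (algebraMap (ZMod p)[X] K f) := by
    intro f
    rw [ha, eval₂_eq_sum_range]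
    refine v.av.map_le_sum fun i _ => ?_
    rw [av_apply, v.ord_mul, v.ord_pow']
    refine add_nonneg ?_ (nsmul_nonneg hτ _)
    by_cases h0 : f.coeff i = 0
    · rw [h0, map_zero, v.ord_zero]; exact le_top
    · rw [ord_const p v ι h0]
  have : Finite (IsLocalRing.ResidueField v.vring) :=
    v.finite_residue (R := (ZMod p)[X])
      ((injective_iff_map_eq_zero _).2 fun f hf => hinj f hf) (finite_quot p) n hdep hint
  exact v.hasResidueCard_of_finite

theorem exists_card [Algebra (RatFunc (ZMod p)) K] [FiniteDimensional (RatFunc (ZMod p)) K]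
    (v : FFPrime K) : ∃ m : ℕ, 1 < m ∧ v.HasResidueCard m := by
  let F := RatFunc (ZMod p)
  let ι : ZMod p →+* K := (algebraMap F K).comp (algebraMap (ZMod p) F)
  let t : K := algebraMap F K RatFunc.X
  have ht : t ≠ 0 := by
    intro h
    exact RatFunc.X_ne_zero ((map_eq_zero (algebraMap F K)).1 h)
  have hev : ∀ f : (ZMod p)[X], f.eval₂ ι t = algebraMap F K (algebraMap (ZMod p)[X] F f) := by
    intro f
    have : (algebraMap F K).comp (algebraMap (ZMod p)[X] F) = eval₂RingHom ι t := by
      apply Polynomial.ringHom_ext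
      · intro a
        simp [ι, F]
      · simp [t, F]
    exact (congrArg (fun φ : (ZMod p)[X] →+* K => φ f) this).symm
  have hinj : ∀ f : (ZMod p)[X], f.eval₂ ι t = 0 → f = 0 := by
    intro f hf
    rw [hev] at hf
    have h1 := (map_eq_zero (algebraMap F K)).1 hf
    exact (map_eq_zero_iff _ (RatFunc.algebraMap_injective (ZMod p))).1 h1
  have hdep : ∀ x : Fin (Module.finrank F K + 1) → K, ∃ g : Fin (Module.finrank F K + 1) → (ZMod p)[X],
      ∑ i, (g i).eval₂ ι t * x i = 0 ∧ ∃ i, g i ≠ 0 := by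
    intro x
    let _ : Algebra (ZMod p)[X] K := ((algebraMap F K).comp (algebraMap (ZMod p)[X] F)).toAlgebra
    have : IsScalarTower (ZMod p)[X] F K := IsScalarTower.of_algebraMap_eq fun f => rfl
    have hF : ¬ LinearIndependent F x := by
      intro hli
      have := hli.fintype_card_le_finrank
      simp at this
    rw [← LinearIndependent.iff_fractionRing (ZMod p)[X] F,
      Fintype.not_linearIndependent_iff] at hF
    obtain ⟨g, hg, hi⟩ := hF
    refine ⟨g, ?_, hi⟩
    rw [← hg]
    refine Finset.sum_congr rfl fun i _ => ?_
    rw [Algebra.smul_def, hev]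
    rfl
  by_cases h0 : 0 ≤ v.ord t
  · exact card_of_param p v ι t h0 hinj _ hdep
  · refine card_of_param p v ι t⁻¹ ?_ (inj_inv ι ht hinj) _ fun x => dep_inv ι ht x (hdep x)
    obtain ⟨m, hm⟩ := v.exists_int ht
    rw [v.ord_inv_int hm]
    rw [hm] at h0
    have : ¬ (0 : ℤ) ≤ m := by exact_mod_cast h0
    exact_mod_cast (by omega : 0 ≤ -m)

end FF

end FFPrime

/-- Behavior of primes in `L = K((1+z⁻¹)^{1/q})` for `z ∈ K^×`,
`z ≠ -1`: (a) any prime `𝔭` of `K` with `ord_𝔭 z < 0` and `ord_𝔭 z ≢ 0 mod q` splits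
completely, and the same order conditions hold at every prime above it; (b) at every
prime of `L` where `z` has nonnegative order, the order of `z` is `≡ 0 mod q`. -/
theorem statement15 (p q : ℕ) [Fact p.Prime] (hq : q.Prime) (hqp : q ≠ p)
    (K : Type) [Field K] [Algebra (RatFunc (ZMod p)) K]
    [FiniteDimensional (RatFunc (ZMod p)) K]
    (ζ : K) (hζ : IsPrimitiveRoot ζ q)
    (z : K) (hz : z ≠ 0) (hz1 : z ≠ -1)
    (M : Type) [Field M] [Algebra K M] (α : M)
    (hα : α ^ q = algebraMap K M (1 + z⁻¹))
    (hgen : IntermediateField.adjoin K {α} = ⊤) :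
    (∀ v : FFPrime K, v.ord z < 0 → ¬ v.OrdDvd q z →
      v.SplitsCompletely (algebraMap K M) ∧
      ∀ w : FFPrime M, w.LiesOver v (algebraMap K M) →
        w.ord (algebraMap K M z) < 0 ∧ ¬ w.OrdDvd q (algebraMap K M z)) ∧
    (∀ w : FFPrime M, 0 ≤ w.ord (algebraMap K M z) → w.OrdDvd q (algebraMap K M z)) := by
  have hα0 : α ≠ 0 := by
    rintro rfl
    rw [zero_pow hq.ne_zero] at hα
    have h1 : 1 + z⁻¹ = 0 := (map_eq_zero (algebraMap K M)).1 hα.symm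
    apply hz1
    field_simp at h1
    linear_combination h1
  have hzM : algebraMap K M z ≠ 0 := (map_ne_zero (algebraMap K M)).2 hz
  refine ⟨?_, ?_⟩
  · intro v hv hvq
    obtain ⟨n, hn, hcard⟩ := FFPrime.exists_card p v
    have main : ∀ w : FFPrime M, w.LiesOver v (algebraMap K M) →
        w.ramIdx v (algebraMap K M) = 1 ∧ w.resDeg v = 1 ∧
          ∀ x : K, w.ord (algebraMap K M x) = v.ord x := by
      intro w hw
      refine FFPrime.dense_split v w ?_ hw hn hcard
      -- the constant `q` is a unit
      let ι : ZMod p →+* M := (algebraMap K M).comp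
        ((algebraMap (RatFunc (ZMod p)) K).comp (algebraMap (ZMod p) (RatFunc (ZMod p))))
      have hqp' : (q : ZMod p) ≠ 0 := by
        intro h
        rw [ZMod.natCast_eq_zero_iff] at h
        exact hqp ((Nat.prime_dvd_prime_iff_eq (Fact.out : p.Prime) hq).1 h).symm
      have hιq : ι (q : ZMod p) = (q : M) := map_natCast ι q
      have hq0 : (q : M) ≠ 0 := by
        rw [← hιq]; exact (map_ne_zero ι).2 hqp'
      have hwq : w.ord (q : M) = 0 := by
        rw [← hιq]; exact FFPrime.ord_const p w ι hqp'
      -- `z⁻¹` has positive order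
      obtain ⟨a, ha⟩ := v.exists_int hz
      have hzi : 0 < w.ord (algebraMap K M z⁻¹) := by
        obtain ⟨e, he0, he⟩ := hw
        rw [he, v.ord_inv_int ha]
        rw [ha] at hv
        have ha' : a < 0 := by exact_mod_cast hv
        have : 0 < (e : ℤ) * (-a) := mul_pos (by exact_mod_cast he0) (by omega)
        exact_mod_cast this
      have hζM : IsPrimitiveRoot (algebraMap K M ζ) q :=
        hζ.map_of_injective (algebraMap K M).injective
      have hprod := hζM.pow_sub_pow_eq_prod_sub_mul α 1 hq.pos
      have hprod' : ∏ μ ∈ Polynomial.nthRootsFinset q (1 : M), (α - μ * 1)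
          = algebraMap K M z⁻¹ := by
        rw [← hprod, hα, map_add, map_one, one_pow]; ring
      have hwα : w.ord α = 0 := by
        apply w.ord_eq_zero_of_pow hq.ne_zero
        apply w.ord_of_sub_one
        rw [hα, map_add, map_one, add_sub_cancel_left]
        exact hzi
      have hroot : ∃ μ ∈ Polynomial.nthRootsFinset q (1 : M), 0 < w.ord (α - μ) := by
        by_contra hno
        push Not at hno
        have : ∀ s : Finset M, (∀ μ ∈ s, w.ord (α - μ) ≤ 0) →
            w.ord (∏ μ ∈ s, (α - μ * 1)) ≤ 0 := by
          classical
          intro s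
          induction s using Finset.induction_on with
          | empty => intro _; rw [Finset.prod_empty, w.ord_one]
          | insert b s hb ih =>
            intro h
            rw [Finset.prod_insert hb, w.ord_mul, mul_one]
            exact add_nonpos (h b (Finset.mem_insert_self _ _))
              (ih fun μ hμ => h μ (Finset.mem_insert_of_mem hμ))
        have h2 := this _ hno
        rw [hprod'] at h2
        exact absurd hzi (not_lt.2 h2)
      obtain ⟨μ, hμ, hμα⟩ := hroot
      rw [Polynomial.mem_nthRootsFinset hq.pos] at hμ
      have : NeZero q := ⟨hq.ne_zero⟩
      obtain ⟨i, -, hi⟩ := hζM.eq_pow_of_pow_eq_one hμ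
      have hμ0 : μ ≠ 0 := by
        rintro rfl
        rw [zero_pow hq.ne_zero] at hμ
        exact zero_ne_one hμ
      have hwμ : w.ord μ = 0 := by
        apply w.ord_eq_zero_of_pow hq.ne_zero
        rw [hμ, w.ord_one]
      have hβ : (α * μ⁻¹) ^ q = algebraMap K M (1 + z⁻¹) := by
        rw [mul_pow, inv_pow, hμ, inv_one, mul_one, hα]
      have hβ1 : 0 < w.ord (α * μ⁻¹ - 1) := by
        have e : α * μ⁻¹ - 1 = (α - μ) * μ⁻¹ := by field_simp
        have hwμi : w.ord μ⁻¹ = 0 := by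
          have := w.ord_inv_int (n := 0) (x := μ) (by rw [hwμ]; rfl)
          rw [this]; rfl
        rw [e, w.ord_mul, hwμi, add_zero]
        exact hμα
      have hAβ := FFPrime.approx_root w hq0 hwq hβ hβ1
      have hAα : FFPrime.Approx K w α := by
        have e : α = α * μ⁻¹ * algebraMap K M (ζ ^ i) := by
          rw [map_pow, hi]; field_simp
        rw [e]
        exact hAβ.mul (FFPrime.approx_algebraMap w _)
      have halg : IsAlgebraic K α := by
        refine IsIntegral.isAlgebraic ?_
        refine IsIntegral.of_pow hq.pos ?_
        rw [hα]; exact isIntegral_algebraMap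
      have htop : Algebra.adjoin K {α} = ⊤ := by
        rw [← IntermediateField.adjoin_simple_toSubalgebra_of_isAlgebraic halg, hgen]
        rfl
      intro m
      have hm : m ∈ Algebra.adjoin K {α} := by rw [htop]; trivial
      induction hm using Algebra.adjoin_induction with
      | mem x hx => rw [Set.mem_singleton_iff.1 hx]; exact hAα
      | algebraMap r => exact FFPrime.approx_algebraMap w r
      | add x y _ _ hx hy => exact hx.add hy
      | mul x y _ _ hx hy => exact hx.mul hy
    refine ⟨fun w hw => ⟨(main w hw).1, (main w hw).2.1⟩, fun w hw => ?_⟩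
    have hord := (main w hw).2.2 z
    refine ⟨by rw [hord]; exact hv, ?_⟩
    rintro ⟨m, hm⟩
    exact hvq ⟨m, by rw [← hord, hm]⟩
  · intro w hw
    obtain ⟨n, hn⟩ := w.exists_int hzM
    obtain ⟨a, ha⟩ := w.exists_int hα0
    rcases hw.eq_or_lt with h0 | hpos
    · exact ⟨0, by rw [← h0, mul_zero]; rfl⟩
    · have hn0 : 0 < n := by rw [hn] at hpos; exact_mod_cast hpos
      have hi : w.ord (algebraMap K M z⁻¹) = ((-n : ℤ) : WithTop ℤ) := by
        rw [map_inv₀]; exact w.ord_inv_int hn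
      have h1 : w.ord (α ^ q) = ((-n : ℤ) : WithTop ℤ) := by
        rw [hα, map_add, map_one, ← hi]
        refine w.av.map_add_eq_of_lt_right ?_
        rw [FFPrime.av_apply, FFPrime.av_apply, hi, w.ord_one]
        exact_mod_cast (by omega : -n < 0)
      rw [w.ord_pow', ha] at h1
      have h2 : q • a = -n := by exact_mod_cast h1
      refine ⟨-a, ?_⟩
      rw [hn]
      congr 1
      rw [nsmul_eq_mul] at h2
      push_cast at h2
      linear_combination h2
end
end

section
/- Let K be a finite extension of 𝔽_p(t), let 𝐊/K be a Galois algebraic (possibly infinite) extension, let q be a prime different from p, and let 𝔭_K be a prime of K. Suppose 𝐊 is q-bounded at 𝔭_K, i.e. for every prime 𝔭_𝐊 of 𝐊 lying over 𝔭_K there exists B ∈ ℕ such that for every finite extension L of K inside 𝐊, the q-adic valuations of e(𝔭_𝐊 ∩ L / 𝔭_K) and of f(𝔭_𝐊 ∩ L / 𝔭_K) are at most B. Then 𝔭_K is uniformly q-bounded in 𝐊: there exists a single B ∈ ℕ such that for every finite extension K̂ of K inside 𝐊 and every prime 𝔭_{K̂} of K̂ lying over 𝔭_K, the q-adic valuations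 of e(𝔭_{K̂}/𝔭_K) and of f(𝔭_{K̂}/𝔭_K) are at most B. -/
noncomputable section

namespace S19

open Polynomial

theorem scaled_poly {K : Type} [Field K] (R : ValuationSubring K) (P : K[X]) (hP : P ≠ 0) :
    ∃ c : K, c ≠ 0 ∧ (∀ i, (C c * P).coeff i ∈ R) ∧ ∃ i, (C c * P).coeff i = 1 := by
  obtain ⟨i, hi, hmax⟩ := P.support.exists_max_image (fun i => R.valuation (P.coeff i))
    (by simpa using hP)
  have hi' : P.coeff i ≠ 0 := by simpa using hi
  refine ⟨(P.coeff i)⁻¹, inv_ne_zero hi', ?_, i, by simp [hi']⟩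
  intro j
  rw [coeff_C_mul]
  by_cases hj : P.coeff j = 0
  · simp [hj]
  · rw [← R.valuation_le_one_iff, map_mul, map_inv₀]
    have h0 : 0 < R.valuation (P.coeff i) := by simpa [zero_lt_iff] using hi'
    rw [inv_mul_le_iff₀ h0, mul_one]
    exact hmax j (by simpa using hj)

theorem isIntegral_of_forall {K B : Type} [Field K] [Field B] [Algebra K B]
    (R : ValuationSubring K) (y : B)
    (h : ∀ V : ValuationSubring B, (∀ r ∈ R, algebraMap K B r ∈ V) → y ∈ V) :
    IsIntegral R y := by
  by_contra hy
  obtain ⟨V, hV, hyV⟩ := Subring.exists_le_valuationSubring_of_isIntegrallyClosedIn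
    (R := (integralClosure R B).toSubring) (x := y) hy
  refine hyV (h V fun r hr => hV ?_)
  exact (integralClosure R B).algebraMap_mem ⟨r, hr⟩

theorem exists_denom {K B : Type} [Field K] [Field B] [Algebra K B] [Algebra.IsAlgebraic K B]
    (R : ValuationSubring K) (W : ValuationSubring B)
    (x : B) (hx : x ∈ W) :
    ∃ s : B, IsIntegral R s ∧ IsIntegral R (s * x) ∧ 1 ≤ W.valuation s := by
  obtain ⟨P, hP0, hP⟩ := Algebra.IsAlgebraic.isAlgebraic (R := K) x
  obtain ⟨c, hc, hR, i, hi⟩ := scaled_poly R P hP0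
  set Q := C c * P with hQ
  have hQx : aeval x Q = 0 := by simp [hQ, hP]
  let b : ℕ → B := fun i => aeval x (divX^[i] Q)
  have hcoef : ∀ i, (divX^[i] Q).coeff 0 = Q.coeff i := by
    intro i
    have : ∀ i j, (divX^[i] Q).coeff j = Q.coeff (j + i) := by
      intro i
      induction i with
      | zero => simp
      | succ i ih => intro j; rw [Function.iterate_succ_apply', coeff_divX, ih]; congr 1; ring
    simpa using this i 0
  have hb : ∀ i, b i = b (i+1) * x + algebraMap K B (Q.coeff i) := by
    intro i
    simp only [b]
    conv_lhs => rw [← divX_mul_X_add (divX^[i] Q)]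
    rw [Function.iterate_succ_apply', hcoef]
    simp
  have hb0 : b 0 = 0 := by simpa [b] using hQx
  have hbdeg : ∀ i, Q.natDegree < i → b i = 0 := by
    intro i hi
    have : divX^[i] Q = 0 := by
      ext j
      have : ∀ i j, (divX^[i] Q).coeff j = Q.coeff (j + i) := by
        intro i
        induction i with
        | zero => simp
        | succ i ih => intro j; rw [Function.iterate_succ_apply', coeff_divX, ih]; congr 1; ring
      rw [this, coeff_zero]
      exact coeff_eq_zero_of_natDegree_lt (by omega)
    simp [b, this]
  have key : ∀ V : ValuationSubring B, (∀ r ∈ R, algebraMap K B r ∈ V) → ∀ i, b i ∈ V := by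
    intro V hV
    rcases V.mem_or_inv_mem x with hxV | hxV
    · intro i
      have : ∀ k i, Q.natDegree < i + k → b i ∈ V := by
        intro k
        induction k with
        | zero => intro i hi; rw [hbdeg i (by simpa using hi)]; exact V.zero_mem
        | succ k ih =>
          intro i hi
          rw [hb]
          exact V.add_mem _ _ (V.mul_mem _ _ (ih _ (by omega)) hxV) (hV _ (hR i))
      exact this (Q.natDegree + 1) i (by omega)
    · intro i
      induction i with
      | zero => rw [hb0]; exact V.zero_mem
      | succ i ih =>
        by_cases hx0 : x = 0
        · rw [hx0] at hxV
          have h1 : ∀ k i, Q.natDegree < i + k → b i ∈ V := by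
            intro k
            induction k with
            | zero => intro i hi; rw [hbdeg i (by simpa using hi)]; exact V.zero_mem
            | succ k ih =>
              intro i hi
              rw [hb, hx0]
              simpa using (hV _ (hR i))
          exact h1 (Q.natDegree + 1) _ (by omega)
        · have : b (i+1) = (b i - algebraMap K B (Q.coeff i)) * x⁻¹ := by
            rw [hb i]; field_simp; ring
          rw [this]
          exact V.mul_mem _ _ (sub_mem ih (hV _ (hR i))) hxV
  have hbInt : ∀ i, IsIntegral R (b i) := fun i =>
    isIntegral_of_forall R _ fun V hV => key V hV i
  have hbxInt : ∀ i, IsIntegral R (b i * x) := by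
    intro i
    cases i with
    | zero => rw [hb0, zero_mul]; exact isIntegral_zero
    | succ i =>
      refine isIntegral_of_forall R _ fun V hV => ?_
      have : b (i+1) * x = b i - algebraMap K B (Q.coeff i) := by rw [hb i]; ring
      rw [this]
      exact sub_mem (key V hV i) (hV _ (hR i))
  by_contra hcon
  push Not at hcon
  have hlt : ∀ i, W.valuation (b i) < 1 := fun i => hcon _ (hbInt i) (hbxInt i)
  have h1 : W.valuation (b i - b (i+1) * x) < 1 := by
    refine Valuation.map_sub_lt _ (hlt i) ?_
    rw [map_mul]
    exact mul_lt_one_of_lt_of_le (hlt _) ((W.valuation_le_one_iff x).2 hx)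
  rw [hb i, hi] at h1
  simp at h1

open scoped Pointwise in
theorem conj {K B : Type} [Field K] [Field B] [Algebra K B] [IsGalois K B]
    (R : ValuationSubring K) (W W' : ValuationSubring B)
    (hW : W.comap (algebraMap K B) = R) (hW' : W'.comap (algebraMap K B) = R) :
    ∃ σ : B ≃ₐ[K] B, ∀ x, x ∈ W' ↔ σ x ∈ W := by
  let A := integralClosure R B
  let _ : TopologicalSpace A := ⊥
  have : DiscreteTopology A := ⟨rfl⟩
  have : ContinuousSMul Gal(B/K) A := by
    rw [continuousSMul_iff_stabilizer_isOpen]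
    intro x
    have := stabilizer_isOpen_of_isIntegral (K := K) (x : B)
    convert this using 1
    ext g
    exact Subtype.ext_iff
  have : Algebra.IsInvariant R A Gal(B/K) := by
    refine ⟨fun b hb => ?_⟩
    obtain ⟨k, hk⟩ := (InfiniteGalois.mem_range_algebraMap_iff_fixed (k := K) (b : B)).2
      (fun g => congrArg Subtype.val (hb g))
    have hk' : IsIntegral R k := by
      have : IsIntegral R (algebraMap K B k) := by rw [hk]; exact b.2
      exact (isIntegral_algebraMap_iff (algebraMap K B).injective).1 this
    obtain ⟨r, hr⟩ := IsIntegrallyClosed.algebraMap_eq_of_integral hk'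
    refine ⟨r, Subtype.ext ?_⟩
    rw [← hk, ← hr]
    rfl
  have hle : ∀ V : ValuationSubring B, V.comap (algebraMap K B) = R →
      ∀ a : A, (a : B) ∈ V := by
    intro V hV a
    have : IsIntegral V (a : B) := by
      obtain ⟨p, hp, h⟩ := a.2
      let f : R →+* V := ((algebraMap K B).comp R.subtype).codRestrict V.toSubring (by
        rintro ⟨r, hr⟩
        rw [← hV] at hr
        exact hr)
      refine ⟨p.map f, hp.map f, ?_⟩
      rw [eval₂_map]
      exact h
    obtain ⟨y, hy⟩ := IsIntegrallyClosed.algebraMap_eq_of_integral this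
    rw [← hy]; exact y.2
  let I : ∀ V : ValuationSubring B, V.comap (algebraMap K B) = R → Ideal A := fun V hV =>
    (IsLocalRing.maximalIdeal V).comap ((algebraMap A B).codRestrict V.toSubring (hle V hV))
  have hI : ∀ V hV, ∀ a : A, a ∈ I V hV ↔ V.valuation (a : B) < 1 := by
    intro V hV a
    exact V.valuation_lt_one_iff ⟨(a : B), hle V hV a⟩
  have hp : ∀ V hV, (I V hV).IsPrime := fun V hV => Ideal.IsPrime.comap _
  have hval : ∀ V : ValuationSubring B, V.comap (algebraMap K B) = R → ∀ r : K,
      V.valuation (algebraMap K B r) < 1 ↔ R.valuation r < 1 := by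
    intro V hV r
    rcases eq_or_ne r 0 with rfl | hr
    · simp
    · have : ∀ {F : Type} [Field F] (S : ValuationSubring F) (y : F), y ≠ 0 →
          (S.valuation y < 1 ↔ ¬ y⁻¹ ∈ S) := by
        intro F _ S y hy
        rw [← S.valuation_le_one_iff, map_inv₀, not_le, one_lt_inv₀]
        simpa [zero_lt_iff] using hy
      rw [this _ _ (by simpa using hr), this _ _ hr, ← map_inv₀, ← ValuationSubring.mem_comap, hV]
  obtain ⟨g, hg⟩ := Algebra.IsInvariant.exists_smul_of_under_eq_of_profinite
    (A := R) (G := Gal(B/K)) (I W' hW') (I W hW) (by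
      ext r
      simp only [Ideal.under, Ideal.mem_comap, hI]
      exact (hval W' hW' r).trans (hval W hW r).symm)
  have hg' : ∀ a : A, W'.valuation (a : B) < 1 ↔ W.valuation (g (a : B)) < 1 := by
    intro a
    have h1 : a ∈ I W' hW' ↔ g • a ∈ I W hW := by
      rw [hg, Ideal.smul_mem_pointwise_smul_iff]
    exact ((hI W' hW' a).symm.trans h1).trans (hI W hW _)
  have hgint : ∀ y : B, ∀ g : Gal(B/K), IsIntegral R y → IsIntegral R (g y) := by
    intro y g hy
    exact (g • (⟨y, hy⟩ : A)).2
  have hdiv : ∀ (V : ValuationSubring B) (s x : B), 1 ≤ V.valuation s → s * x ∈ V → x ∈ V := by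
    intro V s x hs hsx
    rw [← V.valuation_le_one_iff, map_mul] at hsx
    rw [← V.valuation_le_one_iff]
    calc V.valuation x = 1 * V.valuation x := (one_mul _).symm
      _ ≤ V.valuation s * V.valuation x := by gcongr
      _ ≤ 1 := hsx
  refine ⟨g, fun x => ⟨fun hx => ?_, fun hx => ?_⟩⟩
  · obtain ⟨s, hs, hsx, hs1⟩ := exists_denom R W' x hx
    refine hdiv W (g s) (g x) ?_ ?_
    · rw [← not_lt] at hs1 ⊢
      rwa [← hg' ⟨s, hs⟩]
    · rw [← map_mul]
      exact hle W hW ⟨_, hgint _ g hsx⟩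
  · obtain ⟨s, hs, hsx, hs1⟩ := exists_denom R W (g x) hx
    have e : ∀ y, g (g⁻¹ y) = y := fun y => AlgEquiv.apply_symm_apply g y
    have e' : ∀ y, g⁻¹ (g y) = y := fun y => AlgEquiv.symm_apply_apply g y
    refine hdiv W' (g⁻¹ s) x ?_ ?_
    · rw [← not_lt] at hs1 ⊢
      rw [hg' ⟨_, hgint _ g⁻¹ hs⟩]
      simpa [e] using hs1
    · have h2 := hle W' hW' ⟨_, hgint _ g⁻¹ hsx⟩
      simpa [e'] using h2

end S19
namespace S19

open Polynomial

theorem ord_inv {K : Type} [Field K] (u : FFPrime K) (x : K) (hx : x ≠ 0) (n : ℤ)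
    (h : u.ord x = n) : u.ord x⁻¹ = ((-n : ℤ) : WithTop ℤ) := by
  have h1 := u.ord_mul x x⁻¹
  rw [mul_inv_cancel₀ hx, u.ord_one, h] at h1
  obtain ⟨m, hm⟩ := WithTop.ne_top_iff_exists.1 (u.ord_ne_top _ (inv_ne_zero hx))
  rw [← hm] at h1 ⊢
  norm_cast at h1 ⊢
  omega

theorem ord_neg {K : Type} [Field K] (u : FFPrime K) (x : K) : u.ord (-x) = u.ord x := by
  have h1 := u.ord_mul (-1) (-1)
  rw [neg_mul_neg, one_mul, u.ord_one] at h1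
  obtain ⟨m, hm⟩ := WithTop.ne_top_iff_exists.1 (u.ord_ne_top (-1) (by simp))
  rw [← hm] at h1
  have hm0 : m = 0 := by norm_cast at h1; omega
  rw [← neg_one_mul, u.ord_mul, ← hm, hm0]
  simp

/-- The valuation ring of `u`. -/
def ring {K : Type} [Field K] (u : FFPrime K) : ValuationSubring K where
  carrier := {x | 0 ≤ u.ord x}
  mul_mem' := by
    intro a b ha hb
    simp only [Set.mem_ofPred_eq] at *
    rw [u.ord_mul]; exact add_nonneg ha hb
  one_mem' := by simp [u.ord_one]
  add_mem' := by
    intro a b ha hb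
    exact le_trans (le_min ha hb) (u.ord_add a b)
  zero_mem' := by simp [u.ord_zero]
  neg_mem' := by
    intro x hx
    simp only [Set.mem_ofPred_eq] at *
    rwa [ord_neg]
  mem_or_inv_mem' := by
    intro x
    by_cases hx : x = 0
    · left; simp [hx, u.ord_zero]
    · obtain ⟨m, hm⟩ := WithTop.ne_top_iff_exists.1 (u.ord_ne_top _ hx)
      simp only [Set.mem_ofPred_eq]
      rw [ord_inv u x hx m hm.symm, ← hm]
      norm_cast
      omega

theorem mem_ring {K : Type} [Field K] (u : FFPrime K) (x : K) : x ∈ ring u ↔ 0 ≤ u.ord x :=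
  Iff.rfl

theorem exists_ext {K B : Type} [Field K] [Field B] (φ : K →+* B) (R : ValuationSubring K) :
    ∃ W : ValuationSubring B, W.comap φ = R := by
  obtain ⟨W, h, hl⟩ := IsLocalRing.exists_factor_valuationRing (φ.comp R.subtype)
  refine ⟨W, ?_⟩
  ext x
  rw [ValuationSubring.mem_comap]
  refine ⟨fun hx => ?_, fun hx => h ⟨x, hx⟩⟩
  by_contra hxR
  have hxi : x⁻¹ ∈ R := (R.mem_or_inv_mem x).resolve_left hxR
  have hx0 : x ≠ 0 := by rintro rfl; exact hxR R.zero_mem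
  have hu : IsUnit (((φ.comp R.subtype).codRestrict W.toSubring h) ⟨x⁻¹, hxi⟩) := by
    refine IsUnit.of_mul_eq_one ⟨φ x, hx⟩ (Subtype.ext ?_)
    change φ x⁻¹ * φ x = 1
    rw [← map_mul, inv_mul_cancel₀ hx0, map_one]
  obtain ⟨y, hy⟩ := (hl.map_nonunit _ hu).exists_right_inv
  have hy' : x⁻¹ * (y : K) = 1 := congrArg Subtype.val hy
  have : x = y := by
    field_simp at hy'
    exact hy'.symm
  exact hxR (this ▸ y.2)

theorem torsion {K B : Type} [Field K] [Field B] [Algebra K B] [Algebra.IsAlgebraic K B]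
    (W : ValuationSubring B) (x : B) (hx : x ≠ 0) :
    ∃ n : ℕ, 0 < n ∧ ∃ a : K, a ≠ 0 ∧
      W.valuation (x ^ n) = W.valuation (algebraMap K B a) := by
  obtain ⟨P, hP0, hP⟩ := Algebra.IsAlgebraic.isAlgebraic (R := K) x
  have main : ∃ i ∈ P.support, ∃ j ∈ P.support, i < j ∧
      W.valuation (algebraMap K B (P.coeff i) * x ^ i) =
        W.valuation (algebraMap K B (P.coeff j) * x ^ j) := by
    by_contra hcon
    push Not at hcon
    obtain ⟨i, hi, hmax⟩ := P.support.exists_max_image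
      (fun i => W.valuation (algebraMap K B (P.coeff i) * x ^ i)) (by simpa using hP0)
    have hi' : P.coeff i ≠ 0 := by simpa using hi
    have h0 : W.valuation (algebraMap K B (P.coeff i) * x ^ i) ≠ 0 := by simp [hi', hx]
    have := Valuation.map_sum_eq_of_lt W.valuation (s := P.support)
      (f := fun i => algebraMap K B (P.coeff i) * x ^ i) (j := i) hi (by
        intro j hj
        have hj' : j ∈ P.support ∧ j ≠ i := by simpa using hj
        refine lt_of_le_of_ne (hmax j hj'.1) ?_
        rcases lt_or_gt_of_ne hj'.2 with h | h
        · exact hcon j hj'.1 i hi h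
        · exact (hcon i hi j hj'.1 h).symm)
    have e : ∑ i ∈ P.support, algebraMap K B (P.coeff i) * x ^ i = 0 := by
      rw [← hP, aeval_def, eval₂_eq_sum, Polynomial.sum]
    rw [e, map_zero] at this
    exact h0 this.symm
  obtain ⟨i, hi, j, hj, hij, h⟩ := main
  have hi' : P.coeff i ≠ 0 := by simpa using hi
  have hj' : P.coeff j ≠ 0 := by simpa using hj
  refine ⟨j - i, by omega, P.coeff i / P.coeff j, div_ne_zero hi' hj', ?_⟩
  have hvj : W.valuation (algebraMap K B (P.coeff j)) ≠ 0 := by simpa using hj'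
  have hvx : W.valuation x ≠ 0 := by simpa using hx
  rw [map_div₀, map_div₀, eq_div_iff hvj]
  have e : x ^ j = x ^ (j - i) * x ^ i := by rw [← pow_add]; congr 1; omega
  rw [e] at h
  simp only [map_mul, map_pow] at h ⊢
  refine mul_right_cancel₀ (pow_ne_zero i hvx) ?_
  rw [h]
  ac_rfl

end S19
namespace S19

/-- Integer-valued version of `ord` (junk value `0` at `0`). -/
def vZ {K : Type} [Field K] (u : FFPrime K) (a : K) : ℤ := (u.ord a).untopD 0

theorem ord_eq {K : Type} [Field K] (u : FFPrime K) {a : K} (ha : a ≠ 0) :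
    u.ord a = (vZ u a : WithTop ℤ) := by
  obtain ⟨m, hm⟩ := WithTop.ne_top_iff_exists.1 (u.ord_ne_top _ ha)
  simp [vZ, ← hm]

theorem vZ_of_ord {K : Type} [Field K] (u : FFPrime K) {a : K} {n : ℤ}
    (h : u.ord a = (n : WithTop ℤ)) : vZ u a = n := by
  simp [vZ, h]

theorem vZ_mul {K : Type} [Field K] (u : FFPrime K) {a b : K} (ha : a ≠ 0) (hb : b ≠ 0) :
    vZ u (a * b) = vZ u a + vZ u b := by
  apply vZ_of_ord
  rw [u.ord_mul, ord_eq u ha, ord_eq u hb]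
  norm_cast

theorem vZ_one {K : Type} [Field K] (u : FFPrime K) : vZ u 1 = 0 :=
  vZ_of_ord u (by simpa using u.ord_one)

theorem vZ_inv {K : Type} [Field K] (u : FFPrime K) {a : K} (ha : a ≠ 0) :
    vZ u a⁻¹ = - vZ u a :=
  vZ_of_ord u (ord_inv u a ha _ (ord_eq u ha))

theorem vZ_pow {K : Type} [Field K] (u : FFPrime K) {a : K} (ha : a ≠ 0) (n : ℕ) :
    vZ u (a ^ n) = n * vZ u a := by
  induction n with
  | zero => simp [vZ_one]
  | succ n ih => rw [pow_succ, vZ_mul u (pow_ne_zero n ha) ha, ih]; push_cast; ring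

theorem vZ_zpow {K : Type} [Field K] (u : FFPrime K) {a : K} (ha : a ≠ 0) (n : ℤ) :
    vZ u (a ^ n) = n * vZ u a := by
  cases n with
  | ofNat n => simpa using vZ_pow u ha n
  | negSucc n =>
    rw [zpow_negSucc, vZ_inv u (pow_ne_zero _ ha), vZ_pow u ha]
    push_cast
    rw [Int.negSucc_eq]; ring

theorem mem_ring_iff {K : Type} [Field K] (u : FFPrime K) {a : K} (ha : a ≠ 0) :
    a ∈ ring u ↔ 0 ≤ vZ u a := by
  rw [mem_ring, ord_eq u ha]; norm_cast

section

variable {K B : Type} [Field K] [Field B] [Algebra K B]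
  (u : FFPrime K) (W : ValuationSubring B)

theorem val_le_iff (hW : W.comap (algebraMap K B) = ring u) {a b : K} (ha : a ≠ 0) (hb : b ≠ 0) :
    W.valuation (algebraMap K B a) ≤ W.valuation (algebraMap K B b) ↔ vZ u b ≤ vZ u a := by
  have hvb : 0 < W.valuation (algebraMap K B b) := by simpa [zero_lt_iff] using hb
  have h1 : W.valuation (algebraMap K B a) ≤ W.valuation (algebraMap K B b) ↔
      algebraMap K B (a * b⁻¹) ∈ W := by
    rw [← W.valuation_le_one_iff, map_mul, map_inv₀, map_mul, map_inv₀, mul_inv_le_iff₀ hvb,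
      one_mul]
  rw [h1, ← ValuationSubring.mem_comap, hW, mem_ring_iff u (mul_ne_zero ha (inv_ne_zero hb)),
    vZ_mul u ha (inv_ne_zero hb), vZ_inv u hb]
  omega

theorem val_eq_iff (hW : W.comap (algebraMap K B) = ring u) {a b : K} (ha : a ≠ 0) (hb : b ≠ 0) :
    W.valuation (algebraMap K B a) = W.valuation (algebraMap K B b) ↔ vZ u a = vZ u b := by
  rw [le_antisymm_iff, val_le_iff u W hW ha hb, val_le_iff u W hW hb ha]
  omega

variable [Algebra.IsAlgebraic K B]

open Classical in
/-- The rational valuation attached to `W`. -/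
def ordQ (x : B) : ℚ :=
  if hx : x ≠ 0 then
    (vZ u (torsion (K := K) W x hx).choose_spec.2.choose : ℚ) / (torsion (K := K) W x hx).choose
  else 0

theorem ordQ_spec (x : B) (hx : x ≠ 0) : ∃ n : ℕ, 0 < n ∧ ∃ a : K, a ≠ 0 ∧
    W.valuation (x ^ n) = W.valuation (algebraMap K B a) ∧ ordQ u W x = (vZ u a : ℚ) / n := by
  refine ⟨(torsion (K := K) W x hx).choose, (torsion (K := K) W x hx).choose_spec.1,
    (torsion (K := K) W x hx).choose_spec.2.choose,
    (torsion (K := K) W x hx).choose_spec.2.choose_spec.1,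
    (torsion (K := K) W x hx).choose_spec.2.choose_spec.2, ?_⟩
  rw [ordQ, dif_pos hx]

theorem ordQ_eq (hW : W.comap (algebraMap K B) = ring u) (x : B) (hx : x ≠ 0)
    (n : ℕ) (hn : 0 < n) (a : K) (ha : a ≠ 0)
    (h : W.valuation (x ^ n) = W.valuation (algebraMap K B a)) :
    ordQ u W x = (vZ u a : ℚ) / n := by
  obtain ⟨m, hm, b, hb, h', e⟩ := ordQ_spec u W x hx
  rw [e]
  have h1 : W.valuation (algebraMap K B (a ^ m)) = W.valuation (algebraMap K B (b ^ n)) := by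
    rw [map_pow, map_pow, map_pow, map_pow, ← h, ← h', map_pow, map_pow, ← pow_mul, ← pow_mul,
      mul_comm]
  rw [val_eq_iff u W hW (pow_ne_zero _ ha) (pow_ne_zero _ hb), vZ_pow u ha, vZ_pow u hb] at h1
  have hm' : (m : ℚ) ≠ 0 := by positivity
  have hn' : (n : ℚ) ≠ 0 := by positivity
  rw [div_eq_div_iff hm' hn']
  have h2 : (m : ℚ) * vZ u a = n * vZ u b := by exact_mod_cast h1
  linarith

theorem ordQ_algebraMap (hW : W.comap (algebraMap K B) = ring u) (a : K) (ha : a ≠ 0) :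
    ordQ u W (algebraMap K B a) = vZ u a := by
  rw [ordQ_eq u W hW _ (by simpa using ha) 1 one_pos a ha (by simp)]
  simp

theorem ordQ_mul (hW : W.comap (algebraMap K B) = ring u) (x y : B) (hx : x ≠ 0) (hy : y ≠ 0) :
    ordQ u W (x * y) = ordQ u W x + ordQ u W y := by
  obtain ⟨n, hn, a, ha, h, e⟩ := ordQ_spec u W x hx
  obtain ⟨m, hm, b, hb, h', e'⟩ := ordQ_spec u W y hy
  rw [e, e', ordQ_eq u W hW (x * y) (mul_ne_zero hx hy) (n * m) (Nat.mul_pos hn hm)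
    (a ^ m * b ^ n) (mul_ne_zero (pow_ne_zero _ ha) (pow_ne_zero _ hb)) ?_]
  · rw [vZ_mul u (pow_ne_zero _ ha) (pow_ne_zero _ hb), vZ_pow u ha, vZ_pow u hb]
    have hm' : (m : ℚ) ≠ 0 := by positivity
    have hn' : (n : ℚ) ≠ 0 := by positivity
    push_cast
    field_simp
  · simp only [map_mul, map_pow] at h h' ⊢
    rw [← h, ← h', mul_pow, ← pow_mul, ← pow_mul, mul_comm m n]

theorem ordQ_nonneg_iff (hW : W.comap (algebraMap K B) = ring u) (x : B) (hx : x ≠ 0) :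
    0 ≤ ordQ u W x ↔ x ∈ W := by
  obtain ⟨n, hn, a, ha, h, e⟩ := ordQ_spec u W x hx
  have hn' : (0 : ℚ) < n := by positivity
  rw [e, le_div_iff₀ hn', zero_mul, ← W.valuation_le_one_iff]
  have h1 := val_le_iff u W hW ha (one_ne_zero)
  rw [vZ_one, map_one, map_one, ← h, map_pow, pow_le_one_iff (by omega)] at h1
  rw [h1]
  norm_cast

theorem ordQ_inv (hW : W.comap (algebraMap K B) = ring u) (x : B) (hx : x ≠ 0) :
    ordQ u W x⁻¹ = - ordQ u W x := by
  have h := ordQ_mul u W hW x x⁻¹ hx (inv_ne_zero hx)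
  rw [mul_inv_cancel₀ hx] at h
  have h1 := ordQ_algebraMap u W hW 1 one_ne_zero
  rw [map_one, vZ_one] at h1
  push_cast at h1
  linarith

theorem ordQ_add (hW : W.comap (algebraMap K B) = ring u) (x y : B) (hx : x ≠ 0) (hy : y ≠ 0)
    (hxy : x + y ≠ 0) (h : ordQ u W x ≤ ordQ u W y) : ordQ u W x ≤ ordQ u W (x + y) := by
  have hxi := inv_ne_zero hx
  have h1 : y * x⁻¹ ∈ W := by
    rw [← ordQ_nonneg_iff u W hW _ (mul_ne_zero hy hxi), ordQ_mul u W hW _ _ hy hxi,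
      ordQ_inv u W hW x hx]
    linarith
  have h2 : (x + y) * x⁻¹ ∈ W := by
    have : (x + y) * x⁻¹ = 1 + y * x⁻¹ := by field_simp
    rw [this]
    exact W.add_mem _ _ W.one_mem h1
  rw [← ordQ_nonneg_iff u W hW _ (mul_ne_zero hxy hxi), ordQ_mul u W hW _ _ hxy hxi,
      ordQ_inv u W hW x hx] at h2
  linarith

open Classical in
/-- The `FFVal` attached to `W`. -/
def toVal (hW : W.comap (algebraMap K B) = ring u) : FFVal B where
  ord x := if x = 0 then ⊤ else (ordQ u W x : WithTop ℚ)
  ord_zero := by simp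
  ord_ne_top := by intro x hx; simp [hx]
  ord_one := by
    have h1 := ordQ_algebraMap u W hW 1 one_ne_zero
    rw [map_one, vZ_one] at h1
    simp [h1]
  ord_mul := by
    intro x y
    by_cases hx : x = 0
    · simp [hx]
    by_cases hy : y = 0
    · simp [hy]
    simp only [hx, hy, mul_ne_zero hx hy, if_false]
    rw [ordQ_mul u W hW x y hx hy]
    norm_cast
  ord_add := by
    intro x y
    by_cases hx : x = 0
    · simp [hx]
    by_cases hy : y = 0
    · simp [hy]
    by_cases hxy : x + y = 0
    · simp [hxy]
    simp only [hx, hy, hxy, if_false]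
    rcases le_total (ordQ u W x) (ordQ u W y) with h | h
    · refine (min_le_left _ _).trans ?_
      exact_mod_cast ordQ_add u W hW x y hx hy hxy h
    · refine (min_le_right _ _).trans ?_
      rw [add_comm] at hxy ⊢
      exact_mod_cast ordQ_add u W hW y x hy hx hxy h
  nontrivial := by
    obtain ⟨a, ha⟩ := u.ord_surj 1
    have ha0 : a ≠ 0 := by rintro rfl; rw [u.ord_zero] at ha; simp at ha
    refine ⟨algebraMap K B a, ?_, ?_⟩
    · simp [ha0, ordQ_algebraMap u W hW a ha0, vZ_of_ord u ha]
    · simp [ha0]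

theorem toVal_ord (hW : W.comap (algebraMap K B) = ring u) (x : B) (hx : x ≠ 0) :
    (toVal u W hW).ord x = (ordQ u W x : WithTop ℚ) := by
  simp [toVal, hx]

theorem restricts_of (hW : W.comap (algebraMap K B) = ring u) {F : Type} [Field F]
    (w : FFPrime F) (φ : F →+* B) (h : W.comap φ = ring w) :
    (toVal u W hW).RestrictsTo w φ := by
  obtain ⟨t, ht⟩ := w.ord_surj 1
  have ht0 : t ≠ 0 := by rintro rfl; rw [w.ord_zero] at ht; simp at ht
  have hφ : ∀ {y : F}, y ≠ 0 → φ y ≠ 0 := fun hy => by simpa using hy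
  have hnn : ∀ y : F, y ≠ 0 → (0 ≤ ordQ u W (φ y) ↔ 0 ≤ vZ w y) := by
    intro y hy
    rw [ordQ_nonneg_iff u W hW _ (hφ hy), ← mem_ring_iff w hy, ← h]
    rfl
  have hz : ∀ y : F, y ≠ 0 → vZ w y = 0 → ordQ u W (φ y) = 0 := by
    intro y hy h0
    have h1 := (hnn y hy).2 h0.ge
    have h2 := (hnn y⁻¹ (inv_ne_zero hy)).2 (by rw [vZ_inv w hy]; omega)
    rw [map_inv₀, ordQ_inv u W hW _ (hφ hy)] at h2
    linarith
  have hpow : ∀ n : ℕ, ordQ u W (φ t ^ n) = n * ordQ u W (φ t) := by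
    intro n
    induction n with
    | zero => simpa using hz 1 one_ne_zero (vZ_one w)
    | succ n ih =>
      rw [pow_succ, ordQ_mul u W hW _ _ (pow_ne_zero n (hφ ht0)) (hφ ht0), ih]; push_cast; ring
  have hzpow : ∀ n : ℤ, ordQ u W (φ t ^ n) = n * ordQ u W (φ t) := by
    intro n
    cases n with
    | ofNat n => simpa using hpow n
    | negSucc n =>
      rw [zpow_negSucc, ordQ_inv u W hW _ (pow_ne_zero _ (hφ ht0)), hpow, Int.negSucc_eq]
      push_cast; ring
  have hvt : vZ w t = 1 := vZ_of_ord w ht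
  have hc : 0 < ordQ u W (φ t) := by
    have := (hnn t⁻¹ (inv_ne_zero ht0)).not.2 (by rw [vZ_inv w ht0, hvt]; norm_num)
    rw [map_inv₀, ordQ_inv u W hW _ (hφ ht0)] at this
    linarith
  refine ⟨ordQ u W (φ t), hc, fun y => ?_⟩
  by_cases hy : y = 0
  · rw [hy, map_zero, (toVal u W hW).ord_zero, w.ord_zero, WithTop.map_top, WithTop.mul_top]
    exact_mod_cast hc.ne'
  · rw [toVal_ord u W hW _ (hφ hy), ord_eq w hy, WithTop.map_coe]
    have htn : t ^ (-vZ w y) ≠ 0 := zpow_ne_zero _ ht0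
    have h1 := hz (y * t ^ (-vZ w y)) (mul_ne_zero hy htn)
      (by rw [vZ_mul w hy htn, vZ_zpow w ht0, hvt]; ring)
    rw [map_mul, ordQ_mul u W hW _ _ (hφ hy) (hφ htn), map_zpow₀, hzpow] at h1
    push_cast at h1
    rw [← WithTop.coe_mul]
    congr 1
    linarith

end

/-- Transport of a prime along a field isomorphism. -/
def transport {F F' : Type} [Field F] [Field F'] (w : FFPrime F) (e : F' ≃+* F) : FFPrime F' where
  ord x := w.ord (e x)
  ord_zero := by simp [w.ord_zero]
  ord_ne_top := by intro x hx; exact w.ord_ne_top _ (by simpa using hx)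
  ord_one := by simp [w.ord_one]
  ord_mul := by intro x y; simp [w.ord_mul]
  ord_add := by intro x y; rw [map_add]; exact w.ord_add _ _
  ord_surj := by
    intro n
    obtain ⟨x, hx⟩ := w.ord_surj n
    exact ⟨e.symm x, by simpa using hx⟩

theorem transport_card {F F' : Type} [Field F] [Field F'] (w : FFPrime F) (e : F' ≃+* F) (n : ℕ) :
    (transport w e).HasResidueCard n ↔ w.HasResidueCard n := by
  constructor
  · rintro ⟨s, hs, h1, h2, h3⟩
    refine ⟨s.map e.toEquiv.toEmbedding, by simpa using hs, ?_, ?_, ?_⟩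
    · intro x hx
      obtain ⟨y, hy, rfl⟩ := Finset.mem_map.1 hx
      exact h1 y hy
    · intro x hx x' hx' hne
      obtain ⟨y, hy, rfl⟩ := Finset.mem_map.1 hx
      obtain ⟨y', hy', rfl⟩ := Finset.mem_map.1 hx'
      have := h2 y hy y' hy' (by rintro rfl; exact hne rfl)
      change ¬ 0 < w.ord (e (y - y')) at this
      rw [map_sub] at this
      exact this
    · intro z hz
      obtain ⟨x, hx, h⟩ := h3 (e.symm z) (by
        change 0 ≤ w.ord (e (e.symm z))
        rwa [e.apply_symm_apply])
      refine ⟨e x, Finset.mem_map.2 ⟨x, hx, rfl⟩, ?_⟩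
      change 0 < w.ord (e (e.symm z - x)) at h
      rwa [map_sub, e.apply_symm_apply] at h
  · rintro ⟨s, hs, h1, h2, h3⟩
    refine ⟨s.map e.symm.toEquiv.toEmbedding, by simpa using hs, ?_, ?_, ?_⟩
    · intro x hx
      obtain ⟨y, hy, rfl⟩ := Finset.mem_map.1 hx
      change 0 ≤ w.ord (e (e.symm y))
      rw [e.apply_symm_apply]
      exact h1 y hy
    · intro x hx x' hx' hne
      obtain ⟨y, hy, rfl⟩ := Finset.mem_map.1 hx
      obtain ⟨y', hy', rfl⟩ := Finset.mem_map.1 hx'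
      have := h2 y hy y' hy' (by rintro rfl; exact hne rfl)
      change ¬ 0 < w.ord (e (e.symm y - e.symm y'))
      rwa [map_sub, e.apply_symm_apply, e.apply_symm_apply]
    · intro z hz
      obtain ⟨x, hx, h⟩ := h3 (e z) hz
      refine ⟨e.symm x, Finset.mem_map.2 ⟨x, hx, rfl⟩, ?_⟩
      change 0 < w.ord (e (z - e.symm x))
      rwa [map_sub, e.apply_symm_apply]

open Classical in
theorem choose_congr (P Q : ℕ → Prop) (h : ∀ n, P n ↔ Q n) :
    (if h : ∃ n, P n then h.choose else 0) = (if h : ∃ n, Q n then h.choose else 0) := by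
  obtain rfl : P = Q := funext fun n => propext (h n)
  rfl

theorem transport_resDeg {K F F' : Type} [Field K] [Field F] [Field F'] (v : FFPrime K)
    (w : FFPrime F) (e : F' ≃+* F) : (transport w e).resDeg v = w.resDeg v := by
  unfold FFPrime.resDeg
  refine choose_congr _ _ fun n => ?_
  simp only [transport_card]

theorem transport_ramIdx {K F F' : Type} [Field K] [Field F] [Field F'] (v : FFPrime K)
    (w : FFPrime F) (e : F' ≃+* F) (φ : K →+* F) (φ' : K →+* F') (h : ∀ x, e (φ' x) = φ x) :
    (transport w e).ramIdx v φ' = w.ramIdx v φ := by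
  have : ∀ n, (transport w e).LiesOverWith v φ' n ↔ w.LiesOverWith v φ n := by
    intro n
    unfold FFPrime.LiesOverWith
    simp only [transport, h]
  unfold FFPrime.ramIdx
  exact choose_congr _ _ this

theorem ring_of_liesOver {K F : Type} [Field K] [Field F] (v : FFPrime K) (w : FFPrime F)
    (φ : K →+* F) (h : w.LiesOver v φ) : (ring w).comap φ = ring v := by
  obtain ⟨e, he, h⟩ := h
  ext x
  rw [ValuationSubring.mem_comap, mem_ring, mem_ring, h]
  by_cases hx : x = 0
  · have he' : ((e : ℤ) : WithTop ℤ) ≠ 0 := by exact_mod_cast he.ne'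
    rw [hx, v.ord_zero, WithTop.mul_top he']
  · rw [ord_eq v hx, ← WithTop.coe_mul]
    have he' : (0 : ℤ) < e := by exact_mod_cast he
    norm_cast
    exact mul_nonneg_iff_of_pos_left he'

end S19

/-- If `BK/K` is a Galois algebraic extension of a global function
field and the prime `v` of `K` is `q`-bounded in `BK` (along every prime of `BK` over
`v`, the `q`-adic valuations of the ramification indices and residue degrees are
bounded), then `v` is uniformly `q`-bounded in `BK`: a single bound works for all
finite subextensions and all primes over `v`. -/
theorem statement19 (p q : ℕ) [Fact p.Prime] (hq : q.Prime) (hqp : q ≠ p)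
    (K : Type) [Field K] [Algebra (RatFunc (ZMod p)) K]
    [FiniteDimensional (RatFunc (ZMod p)) K]
    (BK : Type) [Field BK] [Algebra K BK] [IsGalois K BK]
    (v : FFPrime K)
    (hqb : ∀ V : FFVal BK, V.RestrictsTo v (algebraMap K BK) →
      ∃ C : ℕ, ∀ L : IntermediateField K BK, FiniteDimensional K L →
        ∀ w : FFPrime L, V.RestrictsTo w L.val.toRingHom →
          padicValNat q (w.ramIdx v (algebraMap K L)) ≤ C ∧
          padicValNat q (w.resDeg v) ≤ C) :
    ∃ C : ℕ, ∀ F : IntermediateField K BK, FiniteDimensional K F →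
      ∀ w : FFPrime F, w.LiesOver v (algebraMap K F) →
        padicValNat q (w.ramIdx v (algebraMap K F)) ≤ C ∧
        padicValNat q (w.resDeg v) ≤ C := by

  obtain ⟨W, hW⟩ := S19.exists_ext (algebraMap K BK) (S19.ring v)
  obtain ⟨C, hC⟩ := hqb (S19.toVal v W hW) (S19.restricts_of v W hW v _ hW)
  refine ⟨C, fun F hF w hw => ?_⟩
  obtain ⟨W', hW'⟩ := S19.exists_ext F.val.toRingHom (S19.ring w)
  have hW'v : W'.comap (algebraMap K BK) = S19.ring v := by
    rw [← S19.ring_of_liesOver v w _ hw, ← hW']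
    rfl
  obtain ⟨σ, hσ⟩ := S19.conj (S19.ring v) W W' hW hW'v
  let e : F ≃ₐ[K] F.map σ.toAlgHom := F.equivMap σ.toAlgHom
  have he : ∀ x : F, ((e x : F.map σ.toAlgHom) : BK) = σ x := fun x => rfl
  have hfin : FiniteDimensional K (F.map σ.toAlgHom) := e.toLinearEquiv.finiteDimensional
  have key := hC (F.map σ.toAlgHom) hfin (S19.transport w e.symm.toRingEquiv) (by
    apply S19.restricts_of v W hW
    ext y
    obtain ⟨x, rfl⟩ := e.surjective y
    rw [ValuationSubring.mem_comap, S19.mem_ring]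
    change σ x ∈ W ↔ 0 ≤ w.ord (e.symm (e x))
    rw [e.symm_apply_apply, ← S19.mem_ring, ← hW', ← hσ]
    rfl)
  rw [S19.transport_resDeg, S19.transport_ramIdx v w e.symm.toRingEquiv (algebraMap K F) _
    (fun x => e.symm.commutes x)] at key
  exact key
end
end
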